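/- Let k ≥ 2 and j ∈ {1,…,k−1}. With high probability, N_{G_p} = ∅ for all p ≥ p_{M_j} simultaneously; that is, for every p ≥ p_{M_j}, every j-cocycle of G_p is generated by copies of M_j^-. -/

import Mathlib

open MeasureTheory Filter

attribute [local instance] Classical.propDecidable

namespace RSC

variable {V : Type*}

/-- `A` is an `i`-dimensional simplex of the complex `G`. -/
def IsSimplex (G : Set (Finset V)) (i : ℕ) (A : Finset V) : Prop :=
  A ∈ G ∧ A.card = i + 1

/-- A `k`-dimensional simplicial complex on vertex set `V`. -/
structure IsKComplex (G : Set (Finset V)) (k : ℕ) : Prop where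
  down : ∀ A ∈ G, ∀ B, B ⊆ A → B.Nonempty → B ∈ G
  singletons : ∀ v : V, ({v} : Finset V) ∈ G
  dim : ∀ A ∈ G, A.card ≤ k + 1

/-- `i`-cochains with `F₂`-coefficients. -/
abbrev Cochain (G : Set (Finset V)) (i : ℕ) : Type _ :=
  {A : Finset V // IsSimplex G i A} → ZMod 2

/-- The coboundary map `δ^i : C^i(G) → C^{i+1}(G)`. -/
noncomputable def coboundary (G : Set (Finset V)) (i : ℕ) :
    Cochain G i →ₗ[ZMod 2] Cochain G (i + 1) where
  toFun f := fun σ => ∑ τ ∈ Finset.powersetCard (i + 1) (σ : Finset V),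
      if h : IsSimplex G i τ then f ⟨τ, h⟩ else 0
  map_add' f g := by
    funext σ
    simp only [Pi.add_apply, ← Finset.sum_add_distrib]
    refine Finset.sum_congr rfl fun τ _ => ?_
    by_cases h : IsSimplex G i τ <;> simp [h]
  map_smul' c f := by
    funext σ
    simp only [Pi.smul_apply, RingHom.id_apply, Finset.smul_sum]
    refine Finset.sum_congr rfl fun τ _ => ?_
    by_cases h : IsSimplex G i τ <;> simp [h]

/-- The submodule of `i`-cocycles. -/
noncomputable def cocycles (G : Set (Finset V)) (i : ℕ) : Submodule (ZMod 2) (Cochain G i) :=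
  LinearMap.ker (coboundary G i)

/-- The submodule of `i`-coboundaries (`δ^{-1}` is the zero map). -/
noncomputable def coboundaries (G : Set (Finset V)) : (i : ℕ) → Submodule (ZMod 2) (Cochain G i)
  | 0 => ⊥
  | (i + 1) => LinearMap.range (coboundary G i)

/-- The `i`-th cohomology group `H^i(G;F₂) = ker δ^i / im δ^{i-1}`. -/
noncomputable abbrev cohomology (G : Set (Finset V)) (i : ℕ) :=
  (cocycles G i) ⧸ ((coboundaries G i).comap (cocycles G i).subtype)

/-- `F₂`-cohomological `j`-connectedness: `H^0 ≅ F₂` and `H^i = 0` for `1 ≤ i ≤ j`. -/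
def CohomConnected (G : Set (Finset V)) (j : ℕ) : Prop :=
  Nonempty (cohomology G 0 ≃ₗ[ZMod 2] ZMod 2) ∧
    ∀ i, 1 ≤ i → i ≤ j → Subsingleton (cohomology G i)

/-- The `j`-flower in `K` with centre `C`: the set of petals `C ∪ {w}`, `w ∈ K \ C`. -/
def Flower [DecidableEq V] (K C : Finset V) : Set (Finset V) :=
  {P | ∃ w ∈ K \ C, P = insert w C}

/-- A copy of `M_j^-`: a `k`-simplex `K` together with a `(j-1)`-simplex `C ⊆ K` such that
each petal of the flower `F(K,C)` is contained in no `k`-simplex other than `K`. -/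
def IsMjMinus [DecidableEq V] (G : Set (Finset V)) (k j : ℕ) (K C : Finset V) : Prop :=
  IsSimplex G k K ∧ C ∈ G ∧ C.card = j ∧ C ⊆ K ∧
    ∀ P ∈ Flower K C, ∀ K', IsSimplex G k K' → P ⊆ K' → K' = K

/-- A `j`-cycle: every `(j-1)`-simplex lies in an even number of members of `J`. -/
def IsCycle (G : Set (Finset V)) (j : ℕ) (J : Finset (Finset V)) : Prop :=
  (∀ σ ∈ J, IsSimplex G j σ) ∧
    ∀ τ : Finset V, τ.card = j → Even (J.filter (fun σ => τ ⊆ σ)).card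

/-- A copy of `M_j`. -/
def IsMj [DecidableEq V] (G : Set (Finset V)) (k j : ℕ) (K C : Finset V)
    (J : Finset (Finset V)) : Prop :=
  IsMjMinus G k j K C ∧ IsCycle G j J ∧ ∃! P : Finset V, P ∈ J ∧ P ∈ Flower K C

/-- A `j`-shell: a `(j+2)`-set all of whose `(j+1)`-subsets are `j`-simplices. -/
def IsShell (G : Set (Finset V)) (j : ℕ) (A : Finset V) : Prop :=
  A.card = j + 2 ∧ ∀ τ ⊆ A, τ.card = j + 1 → τ ∈ G

/-- A copy of `M_j^*`. -/
def IsMjStar [DecidableEq V] (G : Set (Finset V)) (k j : ℕ) (K C : Finset V) (w a : V) : Prop :=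
  IsMjMinus G k j K C ∧ w ∈ K \ C ∧ a ∉ K ∧ IsShell G j (insert a (insert w C))

/-- The support of a cochain. -/
def cochainSupport {G : Set (Finset V)} {i : ℕ} (f : Cochain G i) : Set (Finset V) :=
  {A | ∃ h : IsSimplex G i A, f ⟨A, h⟩ = 1}

/-- A cochain arising from a copy of `M_j^-`: its support is the flower `F(K,C)`. -/
def ArisesFrom [DecidableEq V] (G : Set (Finset V)) (k j : ℕ) (f : Cochain G j)
    (K C : Finset V) : Prop :=
  IsMjMinus G k j K C ∧ cochainSupport f = Flower K C

/-- A `j`-cocycle generated by copies of `M_j^-`: it differs by a `j`-coboundary from a sum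
of `j`-cocycles arising from copies of `M_j^-`. -/
def GeneratedByMjMinus [DecidableEq V] (G : Set (Finset V)) (k j : ℕ) (f : Cochain G j) : Prop :=
  ∃ (m : ℕ) (fs : Fin m → Cochain G j),
    (∀ i, ∃ K C, ArisesFrom G k j (fs i) K C) ∧
      f - (∑ i, fs i) ∈ coboundaries G j

/-- Membership in `N_G`: a `j`-cocycle not generated by copies of `M_j^-`. -/
def InNG [DecidableEq V] (G : Set (Finset V)) (k j : ℕ) (f : Cochain G j) : Prop :=
  f ∈ cocycles G j ∧ ¬ GeneratedByMjMinus G k j f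

/-- Traversability: the transitive closure of "lying in a common `k`-simplex" is `S × S`. -/
def Traversable (G : Set (Finset V)) (k : ℕ) (S : Set (Finset V)) : Prop :=
  ∀ σ₁ ∈ S, ∀ σ₂ ∈ S,
    Relation.TransGen
      (fun a b => a ∈ S ∧ b ∈ S ∧ ∃ K, IsSimplex G k K ∧ a ⊆ K ∧ b ⊆ K) σ₁ σ₂

/-- A local obstacle: a `k`-simplex containing at least `k-j+1` many `j`-simplices,
each lying in no other `k`-simplex. -/
def IsLocalObstacle (G : Set (Finset V)) (k j : ℕ) (K : Finset V) : Prop :=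
  IsSimplex G k K ∧
    k - j + 1 ≤ {σ : Finset V | IsSimplex G j σ ∧ σ ⊆ K ∧
      ∀ K', IsSimplex G k K' → σ ⊆ K' → K' = K}.ncard

/-- The random complex `G_p` given birth times `t`: all singletons together with all
non-empty subsets of `(k+1)`-sets with birth time at most `p`. -/
def complexAt (k n : ℕ) (t : Finset (Fin n) → ℝ) (p : ℝ) : Set (Finset (Fin n)) :=
  {A | (∃ v, A = {v}) ∨
    (A.Nonempty ∧ ∃ K : Finset (Fin n), K.card = k + 1 ∧ t K ≤ p ∧ A ⊆ K)}

/-- The distribution of birth times: i.i.d. uniform on `[0,1]`. -/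
noncomputable def birthMeasure (n : ℕ) : Measure (Finset (Fin n) → ℝ) :=
  Measure.pi fun _ => volume.restrict (Set.Icc (0 : ℝ) 1)

/-- `p_{M_j}`: the supremum of the probabilities `p ∈ [0,1]` at which `G_p` contains
a copy of `M_j`. -/
noncomputable def pMj (k j n : ℕ) (t : Finset (Fin n) → ℝ) : ℝ :=
  sSup {p : ℝ | p ∈ Set.Icc (0 : ℝ) 1 ∧
    ∃ K C J, IsMj (complexAt k n t p) k j K C J}

/-- The threshold `p_j`. -/
noncomputable def pjThreshold (k j n : ℕ) : ℝ :=
  ((j + 1 : ℝ) * Real.log n + Real.log (Real.log n)) * (Nat.factorial (k - j)) /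
    (((k - j + 1 : ℕ) : ℝ) * (n : ℝ) ^ (k - j))

/-- `p_j^-`. -/
noncomputable def pjMinus (k j n : ℕ) : ℝ :=
  (1 - 1 / Real.sqrt (Real.log n)) * ((j + 1 : ℝ) * Real.log n) * (Nat.factorial (k - j)) /
    (((k - j + 1 : ℕ) : ℝ) * (n : ℝ) ^ (k - j))

/-- `p_{j-1}^-`. -/
noncomputable def pjPrevMinus (k j n : ℕ) : ℝ :=
  (1 - 1 / Real.sqrt (Real.log n)) * ((j : ℝ) * Real.log n) * (Nat.factorial (k - j + 1)) /
    (((k - j + 2 : ℕ) : ℝ) * (n : ℝ) ^ (k - j + 1))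

/-- `p_j^{(1)}`. -/
noncomputable def pjOne (k j n : ℕ) : ℝ :=
  1 / (10 * ((j : ℝ) + 1) * (Nat.choose (k + 1) (j + 1)) * (n : ℝ) ^ (k - j))

/-- The number of copies of `M_j^-` in `G`. -/
noncomputable def countMjMinus (k j : ℕ) {n : ℕ} (G : Set (Finset (Fin n))) : ℕ :=
  {x : Finset (Fin n) × Finset (Fin n) | IsMjMinus G k j x.1 x.2}.ncard

/-- The number of copies of `M_j^*` in `G`. -/
noncomputable def countMjStar (k j : ℕ) {n : ℕ} (G : Set (Finset (Fin n))) : ℕ :=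
  {x : Finset (Fin n) × Finset (Fin n) × Fin n × Fin n |
    IsMjStar G k j x.1 x.2.1 x.2.2.1 x.2.2.2}.ncard

/-!
Write `b` for the number of potential `k`-simplices containing a given `j`-simplex, and let
`p = g * log n / b` with `(j + 1) / (k - j + 2) < g < (j + 1) / (k - j + 1)`. The upper bound on
`g` makes copies of `M_j^-` plentiful, by the second moment method for a fixed `C`. Given a copy
`(K, C)` and vertices `w ∈ K \ C` and `a ∉ K`, if every `j`-face of `C ∪ {w, a}` lies in a
`k`-simplex of `G_p`, then these faces form a `j`-cycle meeting the flower only in `C ∪ {w}`. This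
happens with probability tending to `1`, so whp `p ≤ p_{M_j}`.

A cocycle that is not generated by copies of `M_j^-` and has the smallest support among these
gives a set `S` of `j`-simplices which cannot be made smaller by adding coboundaries, which is
connected through present `k`-simplices, and which has at least `k - j + 2` elements, one more
than a flower. None of its *blockers* is present: these are the `k`-simplices containing a
`(j+1)`-simplex on which the coboundary of `S` does not vanish. Minimality of `S` yields at least
`|S| * b / c` blockers for a constant `c`, and `(1 - o(1)) * |S| * b` of them while `|S|` is
bounded.

Up to time `p' = g' * log n / b` with `g'` large, degrees are `O(log n)`, so there are at most
`n ^ (j + 1 + o(1))` connected sets `S` of a given bounded size, each surviving with probability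
`n ^ (-g * |S| + o(1))`, and `g * (k - j + 2) > j + 1`; larger sets are summed geometrically. After
time `p'` the blockers beat the number of all sets `S`, connected or not. Only one lower bound on
the times enters, so the union bound is uniform over all `p ≥ p_{M_j}`.
-/

section Counting

open Finset

/-- The number of `(k+1)`-subsets of an `n`-set that contain a fixed `c`-subset. -/
def codegree (n k c : ℕ) : ℕ := (n - c).choose (k + 1 - c)

/-- The potential `k`-simplices containing `τ`. -/
noncomputable def simplexStar [Fintype V] (k : ℕ) (τ : Finset V) : Finset (Finset V) :=
  {K | K.card = k + 1 ∧ τ ⊆ K}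

/-- The potential `k`-simplices containing exactly one member of `S`. -/
noncomputable def uniquelyHit [Fintype V] (k : ℕ) (S : Finset (Finset V)) : Finset (Finset V) :=
  {K | K.card = k + 1 ∧ #{σ ∈ S | σ ⊆ K} = 1}

lemma sub_mul_codegree_succ (n : ℕ) {k c : ℕ} (hc : c ≤ k) :
    (n - c) * codegree n k (c + 1) = (k + 1 - c) * codegree n k c := by
  obtain ⟨m, rfl⟩ := Nat.exists_eq_add_of_le hc
  have hk : c + m + 1 - (c + 1) = m := by omega
  have hk' : c + m + 1 - c = m + 1 := by omega
  rw [codegree, codegree, hk, hk', Nat.sub_add_eq]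
  rcases (n - c).eq_zero_or_pos with hn | hn
  · simp [hn]
  · obtain ⟨l, hl⟩ := Nat.exists_eq_succ_of_ne_zero hn.ne'
    rw [hl, Nat.succ_sub_one, Nat.succ_eq_add_one, Nat.add_one_mul_choose_eq, mul_comm]

lemma add_two_le_card_union [DecidableEq V] {j : ℕ} {σ τ : Finset V} (hσ : σ.card = j + 1)
    (hτ : τ.card = j + 1) (hne : σ ≠ τ) : j + 2 ≤ (σ ∪ τ).card := by
  by_contra! hlt
  have h₁ : σ = σ ∪ τ := eq_of_subset_of_card_le subset_union_left (by omega)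
  have h₂ : τ = σ ∪ τ := eq_of_subset_of_card_le subset_union_right (by omega)
  exact hne (h₁.trans h₂.symm)

variable [Fintype V] {k j : ℕ}

lemma mem_simplexStar {τ K : Finset V} : K ∈ simplexStar k τ ↔ K.card = k + 1 ∧ τ ⊆ K := by
  simp [simplexStar]

lemma card_simplexStar {τ : Finset V} (h : τ.card ≤ k + 1) :
    (simplexStar k τ).card = codegree (Fintype.card V) k τ.card := by
  have hstar : simplexStar k τ = {K ∈ powersetCard (k + 1) (univ : Finset V) | τ ⊆ K} := by
    ext K; simp [mem_simplexStar]
  rw [hstar, card_filter_powersetCard_subset τ univ (k + 1) (subset_univ _) h, card_univ, codegree]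

lemma card_simplexStar_le {c : ℕ} {τ : Finset V} (h : c ≤ τ.card) (hc : c ≤ k + 1) :
    (simplexStar k τ).card ≤ codegree (Fintype.card V) k c := by
  obtain ⟨τ', hτ', rfl⟩ := exists_subset_card_eq h
  rw [← card_simplexStar hc]
  refine card_le_card fun K hK => ?_
  rw [mem_simplexStar] at hK ⊢
  exact ⟨hK.1, hτ'.trans hK.2⟩

lemma card_mul_codegree_eq_sum {c : ℕ} (hc : c ≤ k + 1) {S : Finset (Finset V)}
    (hS : ∀ σ ∈ S, σ.card = c) :
    S.card * codegree (Fintype.card V) k c =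
      ∑ K ∈ powersetCard (k + 1) univ, #{σ ∈ S | σ ⊆ K} := by
  have hstar : ∀ σ ∈ S, #{K ∈ powersetCard (k + 1) univ | σ ⊆ K} =
      codegree (Fintype.card V) k c := fun σ hσ => by
    rw [← hS σ hσ, ← card_simplexStar (by rw [hS σ hσ]; exact hc)]
    congr 1; ext K; simp [mem_simplexStar]
  rw [← smul_eq_mul, ← sum_const, ← sum_congr rfl hstar]
  exact sum_card_bipartiteAbove_eq_sum_card_bipartiteBelow _

lemma sum_card_offDiag_le (hjk : j < k) {S : Finset (Finset V)}
    (hS : ∀ σ ∈ S, σ.card = j + 1) :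
    ∑ K ∈ powersetCard (k + 1) univ, #({σ ∈ S | σ ⊆ K} : Finset (Finset V)).offDiag ≤
      S.card ^ 2 * codegree (Fintype.card V) k (j + 2) := by
  have hoff : ∀ K : Finset V, ({σ ∈ S | σ ⊆ K} : Finset (Finset V)).offDiag =
      {x ∈ S.offDiag | x.1 ∪ x.2 ⊆ K} := fun K => by
    ext ⟨σ, τ⟩
    simp only [mem_offDiag, mem_filter, union_subset_iff]
    tauto
  have hpair : ∀ x ∈ S.offDiag, #{K ∈ powersetCard (k + 1) univ | x.1 ∪ x.2 ⊆ K} ≤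
      codegree (Fintype.card V) k (j + 2) := fun x hx => by
    rw [mem_offDiag] at hx
    refine le_trans (card_le_card fun K hK => ?_) (card_simplexStar_le
      (add_two_le_card_union (hS _ hx.1) (hS _ hx.2.1) hx.2.2) (by omega))
    simpa [mem_simplexStar] using hK
  calc ∑ K ∈ powersetCard (k + 1) univ, #({σ ∈ S | σ ⊆ K} : Finset (Finset V)).offDiag
      = ∑ x ∈ S.offDiag, #{K ∈ powersetCard (k + 1) univ | x.1 ∪ x.2 ⊆ K} := by
        simp only [hoff]
        exact (sum_card_bipartiteAbove_eq_sum_card_bipartiteBelow _).symm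
    _ ≤ S.offDiag.card * codegree (Fintype.card V) k (j + 2) := by
        simpa using sum_le_sum hpair
    _ ≤ S.card ^ 2 * codegree (Fintype.card V) k (j + 2) := by
        gcongr
        rw [offDiag_card, sq]
        exact Nat.sub_le _ _

lemma card_mul_codegree_le_card_uniquelyHit_add (hjk : j < k) {S : Finset (Finset V)}
    (hS : ∀ σ ∈ S, σ.card = j + 1) :
    S.card * codegree (Fintype.card V) k (j + 1) ≤
      (uniquelyHit k S).card + S.card ^ 2 * codegree (Fintype.card V) k (j + 2) := by
  have hle_ite : ∀ m : ℕ, m ≤ (if m = 1 then 1 else 0) + (m * m - m) := by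
    intro m
    rcases m with _ | _ | m
    · simp
    · simp
    · rw [← Nat.mul_sub_one]
      exact le_add_left (Nat.le_mul_of_pos_right _ (by omega))
  have hhit : (uniquelyHit k S).card = ∑ K ∈ powersetCard (k + 1) (univ : Finset V),
      if #{σ ∈ S | σ ⊆ K} = 1 then 1 else 0 := by
    rw [← card_filter]
    congr 1; ext K; simp [uniquelyHit]
  rw [card_mul_codegree_eq_sum (by omega) hS, hhit]
  refine le_trans ?_ (Nat.add_le_add_left (sum_card_offDiag_le hjk hS) _)
  rw [← sum_add_distrib]
  exact sum_le_sum fun K _ => by simpa only [offDiag_card] using hle_ite _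

end Counting

section Coboundary

open Finset

/-- The `F₂`-coboundary in the full simplex on `V`, for cochains of all dimensions at once. -/
noncomputable def fullCoboundary (F : Finset V → ZMod 2) (ρ : Finset V) : ZMod 2 :=
  ∑ x ∈ ρ, F (ρ.erase x)

/-- The cochain of the full simplex with support `S`. -/
noncomputable def charCochain (S : Finset (Finset V)) (σ : Finset V) : ZMod 2 :=
  if σ ∈ S then 1 else 0

lemma fullCoboundary_add (F G : Finset V → ZMod 2) (ρ : Finset V) :
    fullCoboundary (fun σ => F σ + G σ) ρ = fullCoboundary F ρ + fullCoboundary G ρ :=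
  sum_add_distrib

lemma fullCoboundary_fullCoboundary (F : Finset V → ZMod 2) (ρ : Finset V) :
    fullCoboundary (fullCoboundary F) ρ = 0 := by
  unfold fullCoboundary
  rw [sum_sigma']
  refine sum_involution (fun x _ => ⟨x.2, x.1⟩) ?_ ?_ ?_ fun _ _ => rfl
  · rintro ⟨x, y⟩ -
    rw [erase_right_comm]
    exact CharTwo.add_self_eq_zero _
  · rintro ⟨x, y⟩ hxy - heq
    simp only [mem_sigma, mem_erase] at hxy
    simp only [Sigma.mk.injEq, heq_eq_eq] at heq
    exact hxy.2.1 heq.1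
  · rintro ⟨x, y⟩ hxy
    simp only [mem_sigma, mem_erase] at hxy ⊢
    exact ⟨hxy.2.2, Ne.symm hxy.2.1, hxy.1⟩

variable [Fintype V] {k j : ℕ} {S : Finset (Finset V)}

/-- The `(j+2)`-sets on which the coboundary of the `j`-cochain with support `S` does not vanish. -/
noncomputable def coboundarySupport (j : ℕ) (S : Finset (Finset V)) : Finset (Finset V) :=
  {ρ | ρ.card = j + 2 ∧ fullCoboundary (charCochain S) ρ ≠ 0}

/-- The potential `k`-simplices whose presence prevents `S` from being the support of a
`j`-cocycle. -/
noncomputable def blockers (k j : ℕ) (S : Finset (Finset V)) : Finset (Finset V) :=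
  {K | K.card = k + 1 ∧ ∃ ρ ∈ coboundarySupport j S, ρ ⊆ K}

/-- `S` is a smallest support of a `j`-cochain modulo the coboundaries of the full simplex. -/
structure IsMinimalSupport (j : ℕ) (S : Finset (Finset V)) : Prop where
  card_eq : ∀ σ ∈ S, σ.card = j + 1
  card_le : ∀ g : Finset V → ZMod 2,
    S.card ≤ #{σ | σ.card = j + 1 ∧ charCochain S σ + fullCoboundary g σ ≠ 0}

lemma mem_coboundarySupport {ρ : Finset V} :
    ρ ∈ coboundarySupport j S ↔ ρ.card = j + 2 ∧ fullCoboundary (charCochain S) ρ ≠ 0 := by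
  simp [coboundarySupport]

lemma mem_blockers {K : Finset V} :
    K ∈ blockers k j S ↔ K.card = k + 1 ∧ ∃ ρ ∈ coboundarySupport j S, ρ ⊆ K := by
  simp [blockers]

lemma uniquelyHit_subset_blockers (hjk : j < k) (hS : ∀ σ ∈ S, σ.card = j + 1) :
    uniquelyHit k S ⊆ blockers k j S := by
  intro K hK
  obtain ⟨hKcard, hhit⟩ : K.card = k + 1 ∧ #{σ ∈ S | σ ⊆ K} = 1 := by simpa [uniquelyHit] using hK
  obtain ⟨σ, hσK⟩ := card_eq_one.1 hhit
  have hσ : ∀ τ, τ ∈ S ∧ τ ⊆ K ↔ τ = σ := fun τ => by simpa using Finset.ext_iff.1 hσK τ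
  obtain ⟨hσS, hσK⟩ := (hσ σ).2 rfl
  obtain ⟨v, hvK, hvσ⟩ := exists_mem_notMem_of_card_lt_card
    (show σ.card < K.card by rw [hS σ hσS, hKcard]; omega)
  have hρK : insert v σ ⊆ K := insert_subset hvK hσK
  refine mem_blockers.2 ⟨hKcard, insert v σ, mem_coboundarySupport.2 ⟨?_, ?_⟩, hρK⟩
  · rw [card_insert_of_notMem hvσ, hS σ hσS]
  · rw [fullCoboundary, sum_eq_single v]
    · simp [erase_insert hvσ, charCochain, hσS]
    · intro x _ hxv
      refine if_neg fun hmem => hvσ ?_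
      rw [← (hσ _).1 ⟨hmem, (erase_subset _ _).trans hρK⟩]
      exact mem_erase.2 ⟨hxv.symm, mem_insert_self _ _⟩
    · exact fun h => absurd (mem_insert_self _ _) h

lemma card_mul_codegree_le_card_blockers_add (hjk : j < k) (hS : ∀ σ ∈ S, σ.card = j + 1) :
    S.card * codegree (Fintype.card V) k (j + 1) ≤
      (blockers k j S).card + S.card ^ 2 * codegree (Fintype.card V) k (j + 2) :=
  (card_mul_codegree_le_card_uniquelyHit_add hjk hS).trans
    (Nat.add_le_add_right (card_le_card (uniquelyHit_subset_blockers hjk hS)) _)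

-- Adding the coboundary of the link of `v` moves the support to the coboundary faces at `v`.
lemma IsMinimalSupport.card_le_card_filter_mem (hS : IsMinimalSupport j S) (v : V) :
    S.card ≤ #{ρ ∈ coboundarySupport j S | v ∈ ρ} := by
  set link : Finset V → ZMod 2 := fun τ => if v ∈ τ then 0 else charCochain S (insert v τ)
  have hmem : ∀ σ : Finset V, v ∈ σ → charCochain S σ + fullCoboundary link σ = 0 := by
    intro σ hv
    rw [fullCoboundary, sum_eq_single_of_mem v hv]
    · simp [link, insert_erase hv, CharTwo.add_self_eq_zero]
    · exact fun x _ hxv => if_pos (mem_erase.2 ⟨hxv.symm, hv⟩)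
  have hnotMem : ∀ σ : Finset V, v ∉ σ →
      charCochain S σ + fullCoboundary link σ = fullCoboundary (charCochain S) (insert v σ) := by
    intro σ hv
    rw [fullCoboundary, fullCoboundary, sum_insert hv, erase_insert hv]
    congr 1
    refine sum_congr rfl fun x hx => ?_
    have hvx : v ≠ x := fun h => hv (h ▸ hx)
    simp [link, hv, erase_insert_of_ne hvx]
  have hv_notMem : ∀ σ : Finset V, charCochain S σ + fullCoboundary link σ ≠ 0 → v ∉ σ :=
    fun σ hσ hv => hσ (hmem σ hv)
  refine (hS.card_le link).trans (card_le_card_of_injOn (insert v) ?_ ?_)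
  · intro σ hσ
    obtain ⟨hcard, hne⟩ := (mem_filter.1 hσ).2
    have hv := hv_notMem σ hne
    refine mem_filter.2 ⟨mem_coboundarySupport.2 ⟨?_, hnotMem σ hv ▸ hne⟩, mem_insert_self _ _⟩
    rw [card_insert_of_notMem hv, hcard]
  · intro σ hσ σ' hσ' heq
    rw [← erase_insert (hv_notMem σ (mem_filter.1 hσ).2.2), heq,
      erase_insert (hv_notMem σ' (mem_filter.1 hσ').2.2)]

lemma IsMinimalSupport.card_mul_card_le (hS : IsMinimalSupport j S) :
    Fintype.card V * S.card ≤ (j + 2) * (coboundarySupport j S).card :=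
  calc Fintype.card V * S.card = ∑ _v : V, S.card := by simp
    _ ≤ ∑ v : V, #{ρ ∈ coboundarySupport j S | v ∈ ρ} :=
        sum_le_sum fun v _ => hS.card_le_card_filter_mem v
    _ = ∑ ρ ∈ coboundarySupport j S, #{v | v ∈ ρ} :=
        sum_card_bipartiteAbove_eq_sum_card_bipartiteBelow _
    _ = (j + 2) * (coboundarySupport j S).card := by
        rw [sum_congr rfl fun ρ hρ => ?_, sum_const, smul_eq_mul, mul_comm]
        rw [filter_univ_mem, (mem_coboundarySupport.1 hρ).1]

lemma card_coboundarySupport_mul_codegree_le (hjk : j < k) (S : Finset (Finset V)) :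
    (coboundarySupport j S).card * codegree (Fintype.card V) k (j + 2) ≤
      (k + 1).choose (j + 2) * (blockers k j S).card := by
  have hcard : ∀ ρ ∈ coboundarySupport j S, ρ.card = j + 2 :=
    fun ρ hρ => (mem_coboundarySupport.1 hρ).1
  calc (coboundarySupport j S).card * codegree (Fintype.card V) k (j + 2)
      = ∑ K ∈ powersetCard (k + 1) univ, #{ρ ∈ coboundarySupport j S | ρ ⊆ K} :=
        card_mul_codegree_eq_sum (by omega) hcard
    _ = ∑ K ∈ blockers k j S, #{ρ ∈ coboundarySupport j S | ρ ⊆ K} := by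
        refine (sum_subset (fun K hK => ?_) fun K hK hKS => ?_).symm
        · exact mem_powersetCard_univ.2 (mem_blockers.1 hK).1
        · rw [card_eq_zero, filter_eq_empty_iff]
          exact fun ρ hρ hρK => hKS (mem_blockers.2 ⟨mem_powersetCard_univ.1 hK, ρ, hρ, hρK⟩)
    _ ≤ ∑ _K ∈ blockers k j S, (k + 1).choose (j + 2) := by
        refine sum_le_sum fun K hK => ?_
        rw [← (mem_blockers.1 hK).1, ← card_powersetCard]
        refine card_le_card fun ρ hρ => ?_
        rw [mem_filter] at hρ
        exact mem_powersetCard.2 ⟨hρ.2, hcard ρ hρ.1⟩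
    _ = (k + 1).choose (j + 2) * (blockers k j S).card := by
        rw [sum_const, smul_eq_mul, mul_comm]

lemma IsMinimalSupport.card_mul_codegree_le (hS : IsMinimalSupport j S) (hjk : j < k) :
    S.card * codegree (Fintype.card V) k (j + 1) ≤
      (j + 2) * (k + 1).choose (j + 2) * (blockers k j S).card := by
  set n := Fintype.card V
  calc S.card * codegree n k (j + 1)
      ≤ S.card * ((k + 1 - (j + 1)) * codegree n k (j + 1)) := by
        gcongr; exact Nat.le_mul_of_pos_left _ (by omega)
    _ = S.card * ((n - (j + 1)) * codegree n k (j + 2)) := by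
        rw [← sub_mul_codegree_succ n (by omega)]
    _ ≤ n * S.card * codegree n k (j + 2) := by
        rw [mul_comm n, mul_assoc]; gcongr; omega
    _ ≤ (j + 2) * (coboundarySupport j S).card * codegree n k (j + 2) := by
        exact Nat.mul_le_mul_right _ hS.card_mul_card_le
    _ ≤ (j + 2) * ((k + 1).choose (j + 2) * (blockers k j S).card) := by
        rw [mul_assoc]
        exact Nat.mul_le_mul_left _ (card_coboundarySupport_mul_codegree_le hjk S)
    _ = (j + 2) * (k + 1).choose (j + 2) * (blockers k j S).card := (mul_assoc _ _ _).symm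

end Coboundary

section Exchange

open Finset

lemma card_insert_image_insert_erase (σ K : Finset V) (x : V → V) :
    (insert σ ((K \ σ).image fun v => insert v (σ.erase (x v)))).card = (K \ σ).card + 1 := by
  rw [card_insert_of_notMem, card_image_of_injOn]
  · intro v hv w _ hvw
    have hmem : v ∈ insert w (σ.erase (x w)) := hvw.subset (mem_insert_self _ _)
    exact (mem_insert.1 hmem).resolve_right fun h => (mem_sdiff.1 hv).2 (mem_of_mem_erase h)
  · intro hmem
    obtain ⟨v, hv, hvσ⟩ := mem_image.1 hmem
    exact (mem_sdiff.1 hv).2 (hvσ ▸ mem_insert_self _ _)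

variable [Fintype V] {k j : ℕ} {S : Finset (Finset V)} {K σ : Finset V}

lemma exists_insert_erase_mem (hS : ∀ σ ∈ S, σ.card = j + 1) (hK : K.card = k + 1)
    (hKS : K ∉ blockers k j S) (hσ : σ ∈ S) (hσK : σ ⊆ K) {v : V} (hv : v ∈ K \ σ) :
    ∃ x ∈ σ, insert v (σ.erase x) ∈ S := by
  obtain ⟨hvK, hvσ⟩ := mem_sdiff.1 hv
  have hzero : fullCoboundary (charCochain S) (insert v σ) = 0 := by
    by_contra hne
    refine hKS (mem_blockers.2 ⟨hK, _, mem_coboundarySupport.2 ⟨?_, hne⟩, insert_subset hvK hσK⟩)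
    rw [card_insert_of_notMem hvσ, hS σ hσ]
  by_contra! hnone
  have hsum : ∑ x ∈ σ, charCochain S ((insert v σ).erase x) = 0 := by
    refine sum_eq_zero fun x hx => if_neg ?_
    rw [erase_insert_of_ne (ne_of_mem_of_not_mem hx hvσ).symm]
    exact hnone x hx
  rw [fullCoboundary, sum_insert hvσ, erase_insert hvσ, hsum] at hzero
  simp [charCochain, hσ] at hzero

lemma le_card_filter_subset (hS : ∀ σ ∈ S, σ.card = j + 1) (hK : K.card = k + 1)
    (hKS : K ∉ blockers k j S) (hσ : σ ∈ S) (hσK : σ ⊆ K) :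
    k - j + 1 ≤ #{τ ∈ S | τ ⊆ K} := by
  choose! x _ hxS using fun v hv => exists_insert_erase_mem hS hK hKS hσ hσK (v := v) hv
  have hsub : insert σ ((K \ σ).image fun v => insert v (σ.erase (x v))) ⊆ {τ ∈ S | τ ⊆ K} := by
    refine insert_subset (mem_filter.2 ⟨hσ, hσK⟩) (image_subset_iff.2 fun v hv => ?_)
    exact mem_filter.2 ⟨hxS v hv,
      insert_subset (mem_sdiff.1 hv).1 ((erase_subset _ _).trans hσK)⟩
  calc k - j + 1 ≤ (K \ σ).card + 1 := by
        rw [card_sdiff_of_subset hσK, hK, hS σ hσ]; omega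
    _ ≤ #{τ ∈ S | τ ⊆ K} := (card_insert_image_insert_erase σ K x).symm.trans_le (card_le_card hsub)

lemma exists_forall_mem_iff_of_card_eq (hS : ∀ σ ∈ S, σ.card = j + 1) (hjk : j < k)
    (hK : K.card = k + 1) (hKS : K ∉ blockers k j S) (hσ : σ ∈ S) (hσK : σ ⊆ K)
    (hcard : S.card = k - j + 1) :
    ∃ x ∈ σ, ∀ τ, τ ∈ S ↔ τ = σ ∨ ∃ v ∈ K \ σ, insert v (σ.erase x) = τ := by
  choose! x hxσ hxS using fun v hv => exists_insert_erase_mem hS hK hKS hσ hσK (v := v) hv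
  have hKσ : (K \ σ).card = k - j := by rw [card_sdiff_of_subset hσK, hK, hS σ hσ]; omega
  have hfamily : insert σ ((K \ σ).image fun v => insert v (σ.erase (x v))) = S :=
    eq_of_subset_of_card_le (insert_subset hσ (image_subset_iff.2 hxS))
      (by rw [card_insert_image_insert_erase, hKσ, hcard])
  have hmem_iff : ∀ τ, τ ∈ S ↔ τ = σ ∨ ∃ v ∈ K \ σ, insert v (σ.erase (x v)) = τ := fun τ => by
    rw [← hfamily, mem_insert, mem_image]
  have heq_of_mem : ∀ τ ∈ S, ∀ w ∈ τ, w ∉ σ → τ = insert w (σ.erase (x w)) := by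
    intro τ hτ w hwτ hwσ
    obtain rfl | ⟨v, -, rfl⟩ := (hmem_iff τ).1 hτ
    · exact absurd hwτ hwσ
    · obtain rfl | hw := mem_insert.1 hwτ
      · rfl
      · exact absurd (mem_of_mem_erase hw) hwσ
  have hconst : ∀ v ∈ K \ σ, ∀ w ∈ K \ σ, x v = x w := by
    intro v hv w hw
    rcases eq_or_ne v w with rfl | hvw
    · rfl
    have hwσ := (mem_sdiff.1 hw).2
    have hxw : x v ≠ w := fun h => hwσ (h ▸ hxσ v hv)
    have hxτ : x v ∉ insert v (σ.erase (x v)) := fun h => (mem_sdiff.1 hv).2 <|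
      (mem_insert.1 h).elim (fun e => e ▸ hxσ v hv) fun h => absurd rfl (mem_erase.1 h).1
    -- Exchanging `w` into the exchanged simplex `insert v (σ.erase (x v))` cannot bring `x v` back.
    obtain ⟨y, -, hyS⟩ := exists_insert_erase_mem hS hK hKS (hxS v hv)
      (insert_subset (mem_sdiff.1 hv).1 ((erase_subset _ _).trans hσK))
      (v := w) (mem_sdiff.2 ⟨(mem_sdiff.1 hw).1, fun h => (mem_insert.1 h).elim
        (fun e => hvw e.symm) fun h => hwσ (mem_of_mem_erase h)⟩)
    have hxy : x v ∉ insert w (σ.erase (x w)) := by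
      rw [← heq_of_mem _ hyS w (mem_insert_self _ _) hwσ, mem_insert, not_or]
      exact ⟨hxw, fun h => hxτ (mem_of_mem_erase h)⟩
    by_contra hne
    exact hxy (mem_insert_of_mem (mem_erase.2 ⟨hne, hxσ v hv⟩))
  obtain ⟨v, hv⟩ : (K \ σ).Nonempty := card_pos.1 (by omega)
  refine ⟨x v, hxσ v hv, fun τ => (hmem_iff τ).trans (or_congr_right ?_)⟩
  exact exists_congr fun w => and_congr_right fun hw => by rw [hconst v hv w hw]

lemma exists_coe_eq_flower (hS : ∀ σ ∈ S, σ.card = j + 1) (hjk : j < k)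
    (hK : K.card = k + 1) (hKS : K ∉ blockers k j S) (hσ : σ ∈ S) (hσK : σ ⊆ K)
    (hcard : S.card = k - j + 1) :
    ∃ C, C.card = j ∧ C ⊆ K ∧ (S : Set (Finset V)) = Flower K C := by
  obtain ⟨x, hx, hmem⟩ := exists_forall_mem_iff_of_card_eq hS hjk hK hKS hσ hσK hcard
  refine ⟨σ.erase x, by rw [card_erase_of_mem hx, hS σ hσ, Nat.add_sub_cancel],
    (erase_subset _ _).trans hσK, Set.ext fun τ => ?_⟩
  rw [mem_coe, hmem]
  constructor
  · rintro (rfl | ⟨v, hv, rfl⟩)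
    · exact ⟨x, mem_sdiff.2 ⟨hσK hx, notMem_erase _ _⟩, (insert_erase hx).symm⟩
    · exact ⟨v, sdiff_subset_sdiff subset_rfl (erase_subset _ _) hv, rfl⟩
  · rintro ⟨w, hw, rfl⟩
    by_cases hwσ : w ∈ σ
    · obtain rfl : w = x := by
        by_contra hne
        exact (mem_sdiff.1 hw).2 (mem_erase.2 ⟨hne, hwσ⟩)
      exact Or.inl (insert_erase hx)
    · exact Or.inr ⟨w, mem_sdiff.2 ⟨(mem_sdiff.1 hw).1, hwσ⟩, rfl⟩

end Exchange

section Cochains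

open Finset

variable {G : Set (Finset V)} {k i j : ℕ}

/-- The restriction to `G` of a cochain of the full simplex on `V`. -/
def restrictCochain (G : Set (Finset V)) (i : ℕ) (F : Finset V → ZMod 2) : Cochain G i :=
  fun σ => F σ

lemma IsKComplex.isSimplex_of_subset (hG : IsKComplex G k) {σ τ : Finset V} (hσ : σ ∈ G)
    (hτσ : τ ⊆ σ) (hτ : τ.card = i + 1) : IsSimplex G i τ :=
  ⟨hG.down σ hσ τ hτσ (card_pos.1 (by omega)), hτ⟩

lemma fullCoboundary_eq_sum_powersetCard (F : Finset V → ZMod 2) {ρ : Finset V}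
    (hρ : ρ.card = i + 1) : fullCoboundary F ρ = ∑ τ ∈ powersetCard i ρ, F τ := by
  have herase : powersetCard i ρ = ρ.image ρ.erase := by
    ext τ
    simp only [mem_powersetCard, mem_image]
    constructor
    · rintro ⟨hτρ, hτ⟩
      obtain ⟨x, hx, hxτ⟩ := exists_mem_notMem_of_card_lt_card (show τ.card < ρ.card by omega)
      refine ⟨x, hx, (eq_of_subset_of_card_le (subset_erase.2 ⟨hτρ, hxτ⟩) ?_).symm⟩
      rw [card_erase_of_mem hx]; omega
    · rintro ⟨x, hx, rfl⟩
      exact ⟨erase_subset _ _, by rw [card_erase_of_mem hx]; omega⟩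
  rw [herase, sum_image (erase_injOn ρ), fullCoboundary]

lemma IsKComplex.coboundary_restrictCochain (hG : IsKComplex G k) (F : Finset V → ZMod 2) :
    coboundary G i (restrictCochain G i F) = restrictCochain G (i + 1) (fullCoboundary F) := by
  funext ρ
  rw [restrictCochain, fullCoboundary_eq_sum_powersetCard F ρ.2.2]
  refine sum_congr rfl fun τ hτ => ?_
  rw [mem_powersetCard] at hτ
  exact dif_pos (hG.isSimplex_of_subset ρ.2.1 hτ.1 hτ.2)

lemma IsKComplex.restrictCochain_mem_cocycles_iff (hG : IsKComplex G k)
    {F : Finset V → ZMod 2} :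
    restrictCochain G i F ∈ cocycles G i ↔
      ∀ ρ, IsSimplex G (i + 1) ρ → fullCoboundary F ρ = 0 := by
  rw [cocycles, LinearMap.mem_ker, hG.coboundary_restrictCochain]
  exact ⟨fun h ρ hρ => congrFun h ⟨ρ, hρ⟩, fun h => funext fun ρ => h ρ ρ.2⟩

lemma IsKComplex.restrictCochain_fullCoboundary_mem_coboundaries (hG : IsKComplex G k)
    (hj : 1 ≤ j) (g : Finset V → ZMod 2) :
    restrictCochain G j (fullCoboundary g) ∈ coboundaries G j := by
  obtain ⟨i, rfl⟩ := Nat.exists_eq_add_of_le' hj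
  exact ⟨restrictCochain G i g, hG.coboundary_restrictCochain g⟩

variable [Fintype V]

/-- The support of a cochain as a finset. -/
noncomputable def supportFinset (f : Cochain G i) : Finset (Finset V) :=
  {σ | σ ∈ cochainSupport f}

lemma mem_supportFinset_restrictCochain {F : Finset V → ZMod 2} {σ : Finset V} :
    σ ∈ supportFinset (restrictCochain G i F) ↔ IsSimplex G i σ ∧ F σ ≠ 0 := by
  have hone : F σ = 1 ↔ F σ ≠ 0 := ⟨fun h => h ▸ one_ne_zero, Fin.eq_one_of_ne_zero _⟩
  simp [supportFinset, cochainSupport, restrictCochain, hone]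

lemma restrictCochain_charCochain_supportFinset (f : Cochain G i) :
    restrictCochain G i (charCochain (supportFinset f)) = f := by
  funext σ
  have hmem : (σ : Finset V) ∈ supportFinset f ↔ f σ = 1 :=
    mem_filter.trans ⟨fun h => h.2.2, fun h => ⟨mem_univ _, σ.2, h⟩⟩
  rw [restrictCochain, charCochain, if_congr hmem rfl rfl]
  split_ifs with h
  · exact h.symm
  · exact (of_not_not fun h₀ => h (Fin.eq_one_of_ne_zero _ h₀)).symm

lemma isSimplex_of_mem_supportFinset {f : Cochain G i} {σ : Finset V}
    (hσ : σ ∈ supportFinset f) : IsSimplex G i σ :=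
  (mem_filter.1 hσ).2.1

lemma supportFinset_restrictCochain_charCochain {f : Cochain G i} {T : Finset (Finset V)}
    (hT : T ⊆ supportFinset f) : supportFinset (restrictCochain G i (charCochain T)) = T := by
  ext σ
  rw [mem_supportFinset_restrictCochain]
  simp only [charCochain, ne_eq, ite_eq_right_iff, one_ne_zero, imp_false, not_not]
  exact and_iff_right_of_imp fun h => isSimplex_of_mem_supportFinset (hT h)

lemma supportFinset_nonempty {f : Cochain G i} (hf : f ≠ 0) : (supportFinset f).Nonempty := by
  rw [nonempty_iff_ne_empty]
  intro hempty
  refine hf ?_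
  rw [← restrictCochain_charCochain_supportFinset f, hempty]
  funext σ
  simp [restrictCochain, charCochain]

lemma IsKComplex.not_isSimplex_of_mem_blockers (hG : IsKComplex G k) {f : Cochain G j}
    (hf : f ∈ cocycles G j) {K : Finset V} (hK : K ∈ blockers k j (supportFinset f)) :
    ¬ IsSimplex G k K := by
  intro hKG
  obtain ⟨-, ρ, hρ, hρK⟩ := mem_blockers.1 hK
  obtain ⟨hρcard, hne⟩ := mem_coboundarySupport.1 hρ
  rw [← restrictCochain_charCochain_supportFinset f, hG.restrictCochain_mem_cocycles_iff] at hf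
  exact hne (hf ρ (hG.isSimplex_of_subset hKG.1 hρK hρcard))

end Cochains

section MinimalCocycles

open Finset

/-- The relation `r` connects `S`: it links every proper nonempty part of `S` to the rest. -/
def RelConnected {α : Type*} (r : α → α → Prop) (S : Finset α) : Prop :=
  ∀ T ⊆ S, T.Nonempty → T ≠ S → ∃ u ∈ T, ∃ v ∈ S, v ∉ T ∧ r u v

lemma RelConnected.mono {α : Type*} {r s : α → α → Prop} {S : Finset α}
    (h : RelConnected r S) (hrs : ∀ u v, r u v → s u v) : RelConnected s S := fun T hT hne hTS =>
  let ⟨u, hu, v, hv, hvT, huv⟩ := h T hT hne hTS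
  ⟨u, hu, v, hv, hvT, hrs u v huv⟩

/-- `u` and `v` lie in a common member of `B`. -/
def LinkedBy (B : Set (Finset V)) (u v : Finset V) : Prop := ∃ K ∈ B, u ⊆ K ∧ v ⊆ K

lemma LinkedBy.symm {B : Set (Finset V)} {u v : Finset V} : LinkedBy B u v → LinkedBy B v u :=
  fun ⟨K, hK, hu, hv⟩ => ⟨K, hK, hv, hu⟩

lemma LinkedBy.mono {B B' : Set (Finset V)} (hB : B ⊆ B') {u v : Finset V} :
    LinkedBy B u v → LinkedBy B' u v :=
  fun ⟨K, hK, hu, hv⟩ => ⟨K, hB hK, hu, hv⟩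

/-- Every simplex of `G` other than a vertex lies in a `k`-simplex. -/
def FacetCovered (G : Set (Finset V)) (k : ℕ) : Prop :=
  ∀ A ∈ G, 2 ≤ A.card → ∃ K, IsSimplex G k K ∧ A ⊆ K

/-- The span of the coboundaries and the cochains arising from copies of `M_j^-`. -/
noncomputable def generatedCochains (G : Set (Finset V)) (k j : ℕ) :
    Submodule (ZMod 2) (Cochain G j) :=
  coboundaries G j ⊔ Submodule.span (ZMod 2) {f | ∃ K C, ArisesFrom G k j f K C}

lemma exists_eq_sum_of_mem_span {M : Type*} [AddCommGroup M] [Module (ZMod 2) M] {s : Set M}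
    {x : M} (hx : x ∈ Submodule.span (ZMod 2) s) :
    ∃ (m : ℕ) (y : Fin m → M), (∀ i, y i ∈ s) ∧ x = ∑ i, y i := by
  obtain ⟨m, c, y, rfl⟩ := Submodule.mem_span_set'.1 hx
  set I : Finset (Fin m) := {i | c i ≠ 0}
  refine ⟨I.card, fun i => y (I.equivFin.symm i), fun i => (y _).2, ?_⟩
  rw [Equiv.sum_comp I.equivFin.symm fun i => (y i : M), sum_coe_sort I fun i => (y i : M),
    sum_filter]
  refine sum_congr rfl fun i _ => ?_
  split_ifs with hc
  · have hone : c i = 1 := Fin.eq_one_of_ne_zero _ hc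
    rw [hone, one_smul]
  · rw [of_not_not hc, zero_smul]

lemma generatedByMjMinus_of_mem {G : Set (Finset V)} {k j : ℕ} {f : Cochain G j}
    (hf : f ∈ generatedCochains G k j) : GeneratedByMjMinus G k j f := by
  obtain ⟨y, hy, z, hz, rfl⟩ := Submodule.mem_sup.1 hf
  obtain ⟨m, fs, hfs, rfl⟩ := exists_eq_sum_of_mem_span hz
  exact ⟨m, fs, hfs, by rwa [add_sub_cancel_right]⟩

lemma isMjMinus_of_coe_eq_flower {G : Set (Finset V)} {k j : ℕ}
    (hG : IsKComplex G k) (hj : 1 ≤ j) {S : Finset (Finset V)} {K C : Finset V}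
    (hK : IsSimplex G k K) (hC : C.card = j) (hCK : C ⊆ K)
    (hflower : (S : Set (Finset V)) = Flower K C)
    (hcontains : ∀ K', IsSimplex G k K' → ∀ σ ∈ S, σ ⊆ K' → ∀ τ ∈ S, τ ⊆ K') :
    IsMjMinus G k j K C := by
  refine ⟨hK, hG.down K hK.1 C hCK (card_pos.1 (by omega)), hC, hCK, fun P hP K' hK' hPK' => ?_⟩
  have hPS : P ∈ S := by rwa [← mem_coe, hflower]
  refine (eq_of_subset_of_card_le (fun y hy => ?_) (by rw [hK.2, hK'.2])).symm
  by_cases hyC : y ∈ C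
  · obtain ⟨w, -, rfl⟩ := hP
    exact hPK' (mem_insert_of_mem hyC)
  · have hyS : insert y C ∈ S := by
      rw [← mem_coe, hflower]
      exact ⟨y, mem_sdiff.2 ⟨hy, hyC⟩, rfl⟩
    exact hcontains K' hK' P hPS hPK' _ hyS (mem_insert_self _ _)

variable [Fintype V] {G : Set (Finset V)} {k j : ℕ} {M : Submodule (ZMod 2) (Cochain G j)}
  {f : Cochain G j}

/-- `f` is a `j`-cocycle of `G` outside `M` whose support is as small as possible. -/
def IsSmallestCocycle (M : Submodule (ZMod 2) (Cochain G j)) (f : Cochain G j) : Prop :=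
  MinimalFor (fun f => f ∈ cocycles G j ∧ f ∉ M) (fun f => (supportFinset f).card) f

lemma IsSmallestCocycle.mem_of_card_lt (hf : IsSmallestCocycle M f) {f' : Cochain G j}
    (hf' : f' ∈ cocycles G j) (hlt : (supportFinset f').card < (supportFinset f).card) :
    f' ∈ M := by
  by_contra hM
  exact hlt.not_ge (hf.2 ⟨hf', hM⟩ hlt.le)

lemma IsSmallestCocycle.isMinimalSupport (hf : IsSmallestCocycle M f) (hG : IsKComplex G k)
    (hj : 1 ≤ j) (hM : coboundaries G j ≤ M) : IsMinimalSupport j (supportFinset f) := by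
  refine ⟨fun σ hσ => (isSimplex_of_mem_supportFinset hσ).2, fun g => ?_⟩
  set F : Finset V → ZMod 2 := fun σ => charCochain (supportFinset f) σ + fullCoboundary g σ
  have hg := hG.restrictCochain_fullCoboundary_mem_coboundaries hj g
  have hF : restrictCochain G j F = f + restrictCochain G j (fullCoboundary g) := by
    conv_rhs => rw [← restrictCochain_charCochain_supportFinset f]
    rfl
  have hFM : restrictCochain G j F ∉ M := by
    rw [hF, M.add_mem_iff_left (hM hg)]
    exact hf.1.2
  have hFcocycle : restrictCochain G j F ∈ cocycles G j := by
    have hf' := hf.1.1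
    rw [← restrictCochain_charCochain_supportFinset f, hG.restrictCochain_mem_cocycles_iff] at hf'
    rw [hG.restrictCochain_mem_cocycles_iff]
    intro ρ hρ
    rw [fullCoboundary_add, hf' ρ hρ, fullCoboundary_fullCoboundary, add_zero]
  calc (supportFinset f).card ≤ (supportFinset (restrictCochain G j F)).card := by
        by_contra! hlt
        exact hFM (hf.mem_of_card_lt hFcocycle hlt)
    _ ≤ #{σ | σ.card = j + 1 ∧ F σ ≠ 0} := by
        refine card_le_card fun σ hσ => ?_
        obtain ⟨hσG, hne⟩ := mem_supportFinset_restrictCochain.1 hσ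
        exact mem_filter.2 ⟨mem_univ _, hσG.2, hne⟩

lemma restrictCochain_charCochain_mem_cocycles (hG : IsKComplex G k) (hcov : FacetCovered G k)
    (hf : f ∈ cocycles G j) {T : Finset (Finset V)} (hT : T ⊆ supportFinset f)
    (hunlinked : ∀ u ∈ T, ∀ v ∈ supportFinset f, v ∉ T → ¬ LinkedBy {K | IsSimplex G k K} u v) :
    restrictCochain G j (charCochain T) ∈ cocycles G j := by
  rw [← restrictCochain_charCochain_supportFinset f, hG.restrictCochain_mem_cocycles_iff] at hf
  rw [hG.restrictCochain_mem_cocycles_iff]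
  intro ρ hρ
  obtain ⟨K, hK, hρK⟩ := hcov ρ hρ.1 (by rw [hρ.2]; omega)
  by_cases hTρ : ∃ u ∈ T, u ⊆ ρ
  · obtain ⟨u, hu, huρ⟩ := hTρ
    rw [← hf ρ hρ]
    refine sum_congr rfl fun x _ => if_congr ⟨fun h => hT h, fun h => ?_⟩ rfl rfl
    by_contra hxT
    exact hunlinked u hu _ h hxT
      ⟨K, hK, huρ.trans hρK, (erase_subset _ _).trans hρK⟩
  · push Not at hTρ
    exact sum_eq_zero fun x _ => if_neg fun h => hTρ _ h (erase_subset _ _)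

lemma IsSmallestCocycle.relConnected (hf : IsSmallestCocycle M f) (hG : IsKComplex G k)
    (hcov : FacetCovered G k) :
    RelConnected (LinkedBy {K | IsSimplex G k K}) (supportFinset f) := by
  intro T hT hTne hTS
  by_contra! hunlinked
  have hmem : ∀ T' ⊂ supportFinset f,
      (∀ u ∈ T', ∀ v ∈ supportFinset f, v ∉ T' → ¬ LinkedBy {K | IsSimplex G k K} u v) →
      restrictCochain G j (charCochain T') ∈ M := by
    intro T' hT' hunlinked'
    refine hf.mem_of_card_lt
      (restrictCochain_charCochain_mem_cocycles hG hcov hf.1.1 hT'.subset hunlinked') ?_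
    rw [supportFinset_restrictCochain_charCochain hT'.subset]
    exact card_lt_card hT'
  have hTM := hmem T (hT.ssubset_of_ne hTS) hunlinked
  have hcM := hmem (supportFinset f \ T) (sdiff_ssubset hT hTne) fun u hu v hv hvT huv =>
    hunlinked v (by_contra fun h => hvT (mem_sdiff.2 ⟨hv, h⟩)) u (mem_sdiff.1 hu).1
      (mem_sdiff.1 hu).2 huv.symm
  have hsplit : restrictCochain G j (charCochain T) +
      restrictCochain G j (charCochain (supportFinset f \ T)) = f := by
    conv_rhs => rw [← restrictCochain_charCochain_supportFinset f]
    funext σ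
    by_cases hσ : (σ : Finset V) ∈ T
    · simp [restrictCochain, charCochain, hσ, hT hσ]
    · simp [restrictCochain, charCochain, hσ]
  exact hf.1.2 (hsplit ▸ M.add_mem hTM hcM)

-- A support of the least possible size `k - j + 1` fills a single `k`-simplex, in which it is a
-- flower, so the cocycle arises from a copy of `M_j^-`.
lemma le_card_supportFinset_of_not_mem (hG : IsKComplex G k) (hcov : FacetCovered G k)
    (hj : 1 ≤ j) (hjk : j < k) (hf : f ∈ cocycles G j) (hgen : f ∉ generatedCochains G k j) :
    k - j + 2 ≤ (supportFinset f).card := by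
  set S := supportFinset f with hS_def
  have hS : ∀ σ ∈ S, σ.card = j + 1 := fun σ hσ => (isSimplex_of_mem_supportFinset hσ).2
  have hnot : ∀ K, IsSimplex G k K → K ∉ blockers k j S :=
    fun K hK hKS => hG.not_isSimplex_of_mem_blockers hf hKS hK
  have hle : ∀ K, IsSimplex G k K → ∀ σ ∈ S, σ ⊆ K → k - j + 1 ≤ #{τ ∈ S | τ ⊆ K} :=
    fun K hK σ hσ hσK => le_card_filter_subset hS hK.2 (hnot K hK) hσ hσK
  obtain ⟨σ, hσ⟩ : S.Nonempty := supportFinset_nonempty fun h => hgen (h ▸ zero_mem _)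
  obtain ⟨K, hK, hσK⟩ := hcov σ (isSimplex_of_mem_supportFinset hσ).1 (by rw [hS σ hσ]; omega)
  by_contra! hlt
  have hcard : S.card = k - j + 1 :=
    (Nat.lt_succ_iff.1 hlt).antisymm ((hle K hK σ hσ hσK).trans (card_filter_le _ _))
  obtain ⟨C, hC, hCK, hflower⟩ := exists_coe_eq_flower hS hjk hK.2 (hnot K hK) hσ hσK hcard
  have hcontains : ∀ K', IsSimplex G k K' → ∀ σ ∈ S, σ ⊆ K' → ∀ τ ∈ S, τ ⊆ K' := by
    intro K' hK' σ hσ hσK'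
    exact filter_card_eq ((hcard.trans_le (hle K' hK' σ hσ hσK')).antisymm' (card_filter_le _ _))
  refine hgen (Submodule.mem_sup_right (Submodule.subset_span ⟨K, C,
    isMjMinus_of_coe_eq_flower hG hj hK hC hCK hflower hcontains, ?_⟩))
  rw [← hflower]
  ext τ
  simp [hS_def, supportFinset]

lemma exists_obstruction_of_not_generated [inst : DecidableEq V] (hG : IsKComplex G k)
    (hcov : FacetCovered G k) (hj : 1 ≤ j) (hjk : j < k) (hf : f ∈ cocycles G j)
    (hgen : ¬ GeneratedByMjMinus G k j f) :
    ∃ S : Finset (Finset V), IsMinimalSupport j S ∧ k - j + 2 ≤ S.card ∧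
      RelConnected (LinkedBy {K | IsSimplex G k K}) S ∧
      ∀ K ∈ blockers k j S, ¬ IsSimplex G k K := by
  obtain rfl : inst = fun _ _ => Classical.propDecidable _ := Subsingleton.elim _ _
  obtain ⟨f, hmin⟩ : ∃ f, IsSmallestCocycle (generatedCochains G k j) f :=
    exists_minimalFor_of_wellFoundedLT _ _ ⟨f, hf, fun h => hgen (generatedByMjMinus_of_mem h)⟩
  obtain ⟨hf, hfM⟩ := hmin.1
  exact ⟨supportFinset f, hmin.isMinimalSupport hG hj le_sup_left,
    le_card_supportFinset_of_not_mem hG hcov hj hjk hf hfM, hmin.relConnected hG hcov,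
    fun K => hG.not_isSimplex_of_mem_blockers hf⟩

end MinimalCocycles

section RandomComplex

open Finset

/-- The `k`-simplices present at time `p`. -/
noncomputable def born [Fintype V] (k : ℕ) (t : Finset V → ℝ) (p : ℝ) : Finset (Finset V) :=
  {K | K.card = k + 1 ∧ t K ≤ p}

lemma mem_born [Fintype V] {k : ℕ} {t : Finset V → ℝ} {p : ℝ} {K : Finset V} :
    K ∈ born k t p ↔ K.card = k + 1 ∧ t K ≤ p := by
  simp [born]

variable {n k : ℕ} {t : Finset (Fin n) → ℝ} {p : ℝ}

lemma mem_complexAt_of_subset {K A : Finset (Fin n)} (hK : K ∈ born k t p) (hAK : A ⊆ K)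
    (hA : A.Nonempty) : A ∈ complexAt k n t p :=
  Or.inr ⟨hA, K, (mem_born.1 hK).1, (mem_born.1 hK).2, hAK⟩

lemma exists_born_of_mem_complexAt {A : Finset (Fin n)} (hA : A ∈ complexAt k n t p)
    (hcard : 2 ≤ A.card) : ∃ K ∈ born k t p, A ⊆ K := by
  rcases hA with ⟨v, rfl⟩ | ⟨-, K, hK, htK, hAK⟩
  · rw [card_singleton] at hcard
    omega
  · exact ⟨K, mem_born.2 ⟨hK, htK⟩, hAK⟩

lemma isSimplex_complexAt_iff (hk : 1 ≤ k) {K : Finset (Fin n)} :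
    IsSimplex (complexAt k n t p) k K ↔ K ∈ born k t p := by
  refine ⟨fun ⟨hK, hcard⟩ => ?_, fun hK =>
    ⟨mem_complexAt_of_subset hK Subset.rfl (card_pos.1 ?_), (mem_born.1 hK).1⟩⟩
  · obtain ⟨L, hL, hKL⟩ := exists_born_of_mem_complexAt hK (by omega)
    rwa [eq_of_subset_of_card_le hKL (by rw [hcard, (mem_born.1 hL).1])]
  · rw [(mem_born.1 hK).1]
    omega

lemma isKComplex_complexAt : IsKComplex (complexAt k n t p) k where
  down := by
    rintro _ (⟨v, rfl⟩ | ⟨-, K, hK, htK, hAK⟩) B hBA hB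
    · exact Or.inl ⟨v, (subset_singleton_iff.1 hBA).resolve_left hB.ne_empty⟩
    · exact Or.inr ⟨hB, K, hK, htK, hBA.trans hAK⟩
  singletons v := Or.inl ⟨v, rfl⟩
  dim := by
    rintro A (⟨v, rfl⟩ | ⟨-, K, hK, -, hAK⟩)
    · simp
    · exact (card_le_card hAK).trans hK.le

lemma facetCovered_complexAt (hk : 1 ≤ k) : FacetCovered (complexAt k n t p) k := fun _ hA hcard =>
  let ⟨K, hK, hAK⟩ := exists_born_of_mem_complexAt hA hcard
  ⟨K, (isSimplex_complexAt_iff hk).2 hK, hAK⟩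

end RandomComplex

section Flowers

open Finset

variable {G : Set (Finset V)} {k j : ℕ} {K C : Finset V}

lemma IsShell.isCycle {A : Finset V} (hA : IsShell G j A) :
    IsCycle G j (powersetCard (j + 1) A) := by
  refine ⟨fun σ hσ => ?_, fun τ hτ => ?_⟩
  · rw [mem_powersetCard] at hσ
    exact ⟨hA.2 σ hσ.1 hσ.2, hσ.2⟩
  · by_cases hτA : τ ⊆ A
    · have htwo : #{σ ∈ powersetCard (j + 1) A | τ ⊆ σ} = 2 := by
        rw [card_filter_powersetCard_subset τ A (j + 1) hτA (by omega), hA.1, hτ,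
          Nat.add_sub_cancel_left, Nat.add_sub_cancel_left, Nat.choose_one_right]
      exact ⟨1, by convert htwo⟩
    · have hzero : #{σ ∈ powersetCard (j + 1) A | τ ⊆ σ} = 0 :=
        card_eq_zero.2 (filter_eq_empty_iff.2 fun σ hσ hτσ =>
          hτA (hτσ.trans (mem_powersetCard.1 hσ).1))
      exact ⟨0, by convert hzero⟩

variable [DecidableEq V]

/-- The flower `F(K,C)` as a finset. -/
def petals (K C : Finset V) : Finset (Finset V) := (K \ C).image fun w => insert w C

/-- The potential `k`-simplices whose presence prevents `(K,C)` from being a copy of `M_j^-`. -/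
noncomputable def rivals [Fintype V] (k : ℕ) (K C : Finset V) : Finset (Finset V) :=
  {K' | K'.card = k + 1 ∧ K' ≠ K ∧ ∃ P ∈ petals K C, P ⊆ K'}

lemma mem_petals {P : Finset V} : P ∈ petals K C ↔ P ∈ Flower K C := by
  simp only [petals, mem_image, Flower, Set.mem_ofPred_eq, eq_comm]

lemma mem_rivals [Fintype V] {K' : Finset V} :
    K' ∈ rivals k K C ↔ K'.card = k + 1 ∧ K' ≠ K ∧ ∃ P ∈ petals K C, P ⊆ K' := by
  simp [rivals]

lemma self_notMem_rivals [Fintype V] : K ∉ rivals k K C := fun h => (mem_rivals.1 h).2.1 rfl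

lemma subset_of_mem_petals (hCK : C ⊆ K) {P : Finset V} (hP : P ∈ petals K C) : P ⊆ K := by
  obtain ⟨w, hw, rfl⟩ := mem_petals.1 hP
  exact insert_subset (mem_sdiff.1 hw).1 hCK

lemma card_of_mem_petals (hC : C.card = j) {P : Finset V} (hP : P ∈ petals K C) :
    P.card = j + 1 := by
  obtain ⟨w, hw, rfl⟩ := mem_petals.1 hP
  rw [card_insert_of_notMem (mem_sdiff.1 hw).2, hC]

lemma card_petals (hCK : C ⊆ K) : (petals K C).card = K.card - C.card := by
  rw [petals, card_image_of_injOn, card_sdiff_of_subset hCK]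
  intro v hv w _ heq
  have hvC : v ∈ insert w C := by
    rw [← show insert v C = insert w C from heq]
    exact mem_insert_self v C
  exact (mem_insert.1 hvC).resolve_right (mem_sdiff.1 hv).2

lemma isMjMinus_of_rivals [Fintype V] (hG : IsKComplex G k) (hK : IsSimplex G k K) (hCK : C ⊆ K)
    (hC : C.card = j) (hj : 1 ≤ j) (hrivals : ∀ K' ∈ rivals k K C, ¬ IsSimplex G k K') :
    IsMjMinus G k j K C := by
  refine ⟨hK, hG.down K hK.1 C hCK (card_pos.1 (by omega)), hC, hCK, fun P hP K' hK' hPK' => ?_⟩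
  by_contra hne
  exact hrivals K' (mem_rivals.2 ⟨hK'.2, hne, P, mem_petals.2 hP, hPK'⟩) hK'

lemma isShell_of_faces {w a : V} (hG : IsKComplex G k) (hK : K ∈ G) (hPK : insert w C ⊆ K)
    (hP : (insert w C).card = j + 1) (ha : a ∉ insert w C)
    (hfaces : ∀ x ∈ insert w C, (insert a (insert w C)).erase x ∈ G) :
    IsShell G j (insert a (insert w C)) := by
  refine ⟨by rw [card_insert_of_notMem ha, hP], fun σ hσ hσcard => ?_⟩
  have hσne : σ.Nonempty := card_pos.1 (by omega)
  by_cases hPσ : insert w C ⊆ σ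
  · exact hG.down K hK σ (eq_of_subset_of_card_le hPσ (by omega) ▸ hPK) hσne
  · obtain ⟨x, hx, hxσ⟩ := not_subset.1 hPσ
    exact hG.down _ (hfaces x hx) σ (subset_erase.2 ⟨hσ, hxσ⟩) hσne

lemma IsMjStar.isMj {w a : V} (h : IsMjStar G k j K C w a) :
    IsMj G k j K C (powersetCard (j + 1) (insert a (insert w C))) := by
  obtain ⟨hMj, hw, ha, hshell⟩ := h
  obtain ⟨-, -, hC, hCK, -⟩ := id hMj
  have hPcard : (insert w C).card = j + 1 := by
    rw [card_insert_of_notMem (mem_sdiff.1 hw).2, hC]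
  refine ⟨hMj, hshell.isCycle, insert w C,
    ⟨mem_powersetCard.2 ⟨subset_insert _ _, hPcard⟩, w, hw, rfl⟩, ?_⟩
  rintro Q ⟨hQ, hQflower⟩
  obtain ⟨hQsub, hQcard⟩ := mem_powersetCard.1 hQ
  have haQ : a ∉ Q := fun haQ => ha (subset_of_mem_petals hCK (mem_petals.2 hQflower) haQ)
  exact eq_of_subset_of_card_le ((subset_insert_iff_of_notMem haQ).1 hQsub) (by omega)

variable [Fintype V]

lemma card_rivals_le (hjk : j < k) (hK : K.card = k + 1) (hC : C.card = j) (hCK : C ⊆ K) :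
    (rivals k K C).card ≤ (k - j + 1) * codegree (Fintype.card V) k (j + 1) := by
  have hsub : rivals k K C ⊆ (petals K C).biUnion (simplexStar k) := fun K' hK' => by
    obtain ⟨hcard, -, P, hP, hPK'⟩ := mem_rivals.1 hK'
    exact mem_biUnion.2 ⟨P, hP, mem_simplexStar.2 ⟨hcard, hPK'⟩⟩
  have hpetals : (petals K C).card = k - j + 1 := by rw [card_petals hCK]; omega
  rw [← hpetals]
  refine (card_le_card hsub).trans (card_biUnion_le_card_mul _ _ _ fun P hP => ?_)
  exact card_simplexStar_le (card_of_mem_petals hC hP).ge (by omega)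

lemma card_rivals_inter_le {K' C' : Finset V} (hjk : j < k) (hK : K.card = k + 1) (hC : C.card = j)
    (hCK : C ⊆ K) (hK' : K'.card = k + 1) (hC' : C'.card = j) (hCK' : C' ⊆ K')
    (hdisj : Disjoint (petals K C) (petals K' C')) :
    (rivals k K C ∩ rivals k K' C').card ≤
      (k - j + 1) ^ 2 * codegree (Fintype.card V) k (j + 2) := by
  have hsub : rivals k K C ∩ rivals k K' C' ⊆
      (petals K C ×ˢ petals K' C').biUnion fun x => simplexStar k (x.1 ∪ x.2) := fun L hL => by
    obtain ⟨hL, hL'⟩ := mem_inter.1 hL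
    obtain ⟨hcard, -, P, hP, hPL⟩ := mem_rivals.1 hL
    obtain ⟨-, -, P', hP', hPL'⟩ := mem_rivals.1 hL'
    exact mem_biUnion.2 ⟨(P, P'), mem_product.2 ⟨hP, hP'⟩,
      mem_simplexStar.2 ⟨hcard, union_subset hPL hPL'⟩⟩
  have hpairs : (petals K C ×ˢ petals K' C').card = (k - j + 1) ^ 2 := by
    rw [card_product, card_petals hCK, card_petals hCK', hK, hK', hC, hC', sq,
      show k + 1 - j = k - j + 1 by omega]
  rw [← hpairs]
  refine (card_le_card hsub).trans (card_biUnion_le_card_mul _ _ _ fun x hx => ?_)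
  obtain ⟨hP, hP'⟩ := mem_product.1 hx
  exact card_simplexStar_le (add_two_le_card_union (card_of_mem_petals hC hP)
    (card_of_mem_petals hC' hP') fun h => disjoint_left.1 hdisj hP (h ▸ hP')) (by omega)

end Flowers

section Walks

open Finset

variable {α : Type*} {r : α → α → Prop}

lemma RelConnected.exists_isChain {S : Finset α} (hS : RelConnected r S)
    (hsymm : ∀ u v, r u v → r v u) (m : ℕ) (hm : m + 1 ≤ S.card) :
    ∃ w : List α, w.length = 2 * m + 1 ∧ w.IsChain r ∧ w.toFinset ⊆ S ∧
      w.toFinset.card = m + 1 := by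
  induction m with
  | zero =>
    obtain ⟨σ, hσ⟩ : S.Nonempty := card_pos.1 (by omega)
    exact ⟨[σ], by simp, by simp, by simpa using hσ, by simp⟩
  | succ m ih =>
    obtain ⟨w, hlen, hchain, hwS, hcard⟩ := ih (by omega)
    obtain ⟨u, hu, v, hvS, hvw, huv⟩ := hS w.toFinset hwS (card_pos.1 (by omega))
      (fun h => by rw [h] at hcard; omega)
    obtain ⟨A, B, rfl⟩ := List.append_of_mem (List.mem_toFinset.1 hu)
    have hinsert : (A ++ u :: v :: u :: B).toFinset = insert v (A ++ u :: B).toFinset := by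
      ext x
      simp only [List.mem_toFinset, List.mem_append, List.mem_cons, mem_insert]
      tauto
    refine ⟨A ++ u :: v :: u :: B, ?_, ?_, ?_, ?_⟩
    · simp only [List.length_append, List.length_cons] at hlen ⊢
      omega
    · rw [List.isChain_split] at hchain ⊢
      rw [List.isChain_cons_cons, List.isChain_cons_cons]
      exact ⟨hchain.1, huv, hsymm u v huv, hchain.2⟩
    · rw [hinsert]
      exact insert_subset hvS hwS
    · rw [hinsert, card_insert_of_notMem hvw, hcard]

lemma exists_finset_isChain {X : Finset α} {D : ℕ} (hD : ∀ u ∈ X, #{v ∈ X | r v u} ≤ D) (l : ℕ) :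
    ∃ W : Finset (List α), W.card ≤ X.card * D ^ l ∧
      ∀ w : List α, w.length = l + 1 → (∀ u ∈ w, u ∈ X) → w.IsChain r → w ∈ W := by
  induction l with
  | zero =>
    refine ⟨X.image fun u => [u], by simpa using card_image_le, fun w hw hX _ => ?_⟩
    obtain ⟨u, rfl⟩ := List.length_eq_one_iff.1 hw
    exact mem_image_of_mem _ (hX u (by simp))
  | succ l ih =>
    obtain ⟨W, hWcard, hW⟩ := ih
    refine ⟨W.biUnion fun w => {v ∈ X | ∃ u ∈ w.head?, u ∈ X ∧ r v u}.image (· :: w), ?_,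
      fun w hw hX hchain => ?_⟩
    · rw [pow_succ, ← mul_assoc]
      refine (card_biUnion_le_card_mul _ _ D fun w _ => card_image_le.trans ?_).trans
        (Nat.mul_le_mul_right D hWcard)
      rcases w with _ | ⟨u, w⟩
      · simp
      · by_cases hu : u ∈ X
        · simpa [hu] using hD u hu
        · simp [hu]
    · match w with
      | v :: u :: w =>
        rw [List.isChain_cons_cons] at hchain
        have hmem : u :: w ∈ W := hW _ (by simpa using hw)
          (fun x hx => hX x (List.mem_cons_of_mem v hx)) hchain.2
        refine mem_biUnion.2 ⟨u :: w, hmem, mem_image_of_mem _ (mem_filter.2 ⟨hX v (by simp), ?_⟩)⟩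
        exact ⟨u, rfl, hX u (by simp), hchain.1⟩

-- A connected set of size `s` is traversed by a walk with `2 * (s - 1)` steps.
lemma card_powersetCard_filter_relConnected_le (hsymm : ∀ u v, r u v → r v u) {X : Finset α}
    {D : ℕ} (hD : ∀ u ∈ X, #{v ∈ X | r v u} ≤ D) {s : ℕ} (hs : 1 ≤ s) :
    #{S ∈ powersetCard s X | RelConnected r S} ≤ X.card * D ^ (2 * (s - 1)) := by
  obtain ⟨W, hWcard, hW⟩ := exists_finset_isChain hD (2 * (s - 1))
  refine le_trans (card_le_card fun S hS => ?_) ((card_image_le (f := List.toFinset)).trans hWcard)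
  obtain ⟨⟨hSX, hScard⟩, hconn⟩ : (S ⊆ X ∧ S.card = s) ∧ RelConnected r S := by
    simpa [mem_powersetCard] using hS
  obtain ⟨w, hlen, hchain, hwS, hcard⟩ := hconn.exists_isChain hsymm (s - 1) (by omega)
  have hw : w.toFinset = S := eq_of_subset_of_card_le hwS (by omega)
  refine mem_image.2 ⟨w, hW w hlen (fun u hu => hSX ?_) hchain, hw⟩
  exact hw ▸ List.mem_toFinset.2 hu

/-- Every `j`-simplex lies in at most `Δ` members of `B`. -/
def DegreeLE (B : Finset (Finset V)) (j Δ : ℕ) : Prop :=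
  ∀ σ : Finset V, σ.card = j + 1 → #{K ∈ B | σ ⊆ K} ≤ Δ

variable {k j Δ : ℕ} {B : Finset (Finset V)}

lemma DegreeLE.mono {B' : Finset (Finset V)} (h : DegreeLE B j Δ) (hB : B' ⊆ B) :
    DegreeLE B' j Δ := fun σ hσ => (card_le_card (filter_subset_filter _ hB)).trans (h σ hσ)

lemma DegreeLE.card_filter_linkedBy_le [Fintype V] (hdeg : DegreeLE B j Δ)
    (hB : ∀ K ∈ B, K.card = k + 1) {u : Finset V} (hu : u.card = j + 1) :
    #{v ∈ powersetCard (j + 1) univ | LinkedBy B v u} ≤ Δ * (k + 1).choose (j + 1) := by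
  have hsub : ({v ∈ powersetCard (j + 1) univ | LinkedBy B v u} : Finset (Finset V)) ⊆
      {K ∈ B | u ⊆ K}.biUnion (powersetCard (j + 1)) := fun v hv => by
    obtain ⟨hv, K, hK, hvK, huK⟩ := mem_filter.1 hv
    exact mem_biUnion.2 ⟨K, mem_filter.2 ⟨hK, huK⟩,
      mem_powersetCard.2 ⟨hvK, (mem_powersetCard.1 hv).2⟩⟩
  refine (card_le_card hsub).trans ((card_biUnion_le_card_mul _ _ _ fun K hK => ?_).trans
    (Nat.mul_le_mul_right _ (hdeg u hu)))
  rw [card_powersetCard, hB K (mem_filter.1 hK).1]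

lemma DegreeLE.card_filter_relConnected_le [Fintype V] (hdeg : DegreeLE B j Δ)
    (hB : ∀ K ∈ B, K.card = k + 1) {s : ℕ} (hs : 1 ≤ s) :
    #{S ∈ powersetCard s (powersetCard (j + 1) (univ : Finset V)) | RelConnected (LinkedBy B) S} ≤
      (Fintype.card V).choose (j + 1) * (Δ * (k + 1).choose (j + 1)) ^ (2 * (s - 1)) := by
  refine (card_powersetCard_filter_relConnected_le (fun _ _ => LinkedBy.symm) (fun u hu =>
    hdeg.card_filter_linkedBy_le hB (mem_powersetCard.1 hu).2) hs).trans_eq ?_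
  rw [card_powersetCard, card_univ]

end Walks

section Moments

open Finset ProbabilityTheory

lemma measure_pi_inter_of_dependsOn {ι : Type*} [Fintype ι] {X : ι → Type*}
    [∀ i, MeasurableSpace (X i)] (μ : ∀ i, Measure (X i)) [∀ i, IsProbabilityMeasure (μ i)]
    {D : Set ι} {E F : Set (∀ i, X i)} (hE : MeasurableSet E) (hF : MeasurableSet F)
    (hED : DependsOn (· ∈ E) Dᶜ) (hFD : DependsOn (· ∈ F) D) :
    Measure.pi μ (E ∩ F) = Measure.pi μ E * Measure.pi μ F := by
  obtain ⟨x₀⟩ := nonempty_of_isProbabilityMeasure (Measure.pi μ)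
  have hindep := (iIndepFun_pi (μ := μ) (X := fun _ x => x)
    fun _ => aemeasurable_id).indepFun_finset D.toFinsetᶜ D.toFinset disjoint_compl_left
      fun i => measurable_pi_apply i
  have hpre : ∀ {A : Set (∀ i, X i)} {S : Finset ι}, DependsOn (· ∈ A) S →
      (fun x (i : S) => x i) ⁻¹' (Function.updateFinset x₀ S ⁻¹' A) = A := fun hA => by
    ext x
    exact iff_of_eq (hA fun i hi => by simp [Function.updateFinset, mem_coe.1 hi])
  have h := hindep.measure_inter_preimage_eq_mul _ _ (measurable_updateFinset (x := x₀) hE)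
    (measurable_updateFinset (x := x₀) hF)
  rwa [hpre (by simpa using hED), hpre (by simpa using hFD)] at h

variable {Ω ι : Type*} [MeasurableSpace Ω] {μ : Measure Ω} [IsProbabilityMeasure μ]
  {I : Finset ι} {A : ι → Set Ω}

lemma memLp_sum_indicator_one (hA : ∀ i ∈ I, MeasurableSet (A i)) (q : ENNReal) :
    MemLp (fun ω => ∑ i ∈ I, (A i).indicator (1 : Ω → ℝ) ω) q μ :=
  memLp_finsetSum I fun i hi =>
    memLp_indicator_const q (hA i hi) (1 : ℝ) (Or.inr (measure_ne_top μ _))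

lemma integral_sum_indicator_one (hA : ∀ i ∈ I, MeasurableSet (A i)) :
    ∫ ω, ∑ i ∈ I, (A i).indicator (1 : Ω → ℝ) ω ∂μ = ∑ i ∈ I, μ.real (A i) := by
  have hint : ∀ i ∈ I, Integrable ((A i).indicator (1 : Ω → ℝ)) μ := fun i hi =>
    (integrable_const (1 : ℝ)).indicator (hA i hi)
  rw [integral_finsetSum I hint]
  exact sum_congr rfl fun i hi => integral_indicator_one (hA i hi)

lemma sum_measureReal_le_of_card_le [∀ ω, DecidablePred fun i => ω ∈ A i]
    (hA : ∀ i ∈ I, MeasurableSet (A i)) {c : ℝ} (hc : ∀ ω, (#{i ∈ I | ω ∈ A i} : ℝ) ≤ c) :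
    ∑ i ∈ I, μ.real (A i) ≤ c := by
  rw [← integral_sum_indicator_one hA]
  calc ∫ ω, ∑ i ∈ I, (A i).indicator (1 : Ω → ℝ) ω ∂μ
      ≤ ∫ _, c ∂μ := integral_mono ((memLp_sum_indicator_one hA 1).integrable le_rfl)
        (integrable_const c) fun ω => by
          simpa [Set.indicator_apply, sum_boole] using hc ω
    _ = c := by simp

lemma measureReal_forall_notMem_le_of_second_moment (hA : ∀ i ∈ I, MeasurableSet (A i)) {m c : ℝ}
    (hm : ∑ i ∈ I, μ.real (A i) = m) (hm_pos : 0 < m)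
    (hc : ∑ i ∈ I, ∑ j ∈ I, μ.real (A i ∩ A j) ≤ m + c * m ^ 2) :
    μ.real {ω | ∀ i ∈ I, ω ∉ A i} ≤ 1 / m + (c - 1) := by
  set X : Ω → ℝ := fun ω => ∑ i ∈ I, (A i).indicator (1 : Ω → ℝ) ω with hX
  have hXmem : MemLp X 2 μ := memLp_sum_indicator_one hA 2
  have hmean : ∫ ω, X ω ∂μ = m := (integral_sum_indicator_one hA).trans hm
  have hsquare : ∫ ω, (X ^ 2) ω ∂μ = ∑ i ∈ I, ∑ j ∈ I, μ.real (A i ∩ A j) := by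
    have hpairs : ∀ x ∈ I ×ˢ I, MeasurableSet (A x.1 ∩ A x.2) := fun x hx =>
      (hA _ (mem_product.1 hx).1).inter (hA _ (mem_product.1 hx).2)
    rw [← sum_product', ← integral_sum_indicator_one hpairs]
    refine integral_congr_ae (.of_forall fun ω => ?_)
    simp only [hX, Pi.pow_apply, sq, sum_mul_sum, sum_product, Set.inter_indicator_one,
      Pi.mul_apply]
  have hvar : Var[X; μ] ≤ m + (c - 1) * m ^ 2 := by
    rw [variance_eq_sub hXmem, hmean, hsquare]
    linarith
  have hnone : {ω | ∀ i ∈ I, ω ∉ A i} ⊆ {ω | m ≤ |X ω - ∫ x, X x ∂μ|} := fun ω hω => by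
    have hzero : X ω = 0 := sum_eq_zero fun i hi => Set.indicator_of_notMem (hω i hi) 1
    simp [hzero, hmean, abs_of_pos hm_pos]
  calc μ.real {ω | ∀ i ∈ I, ω ∉ A i}
      ≤ μ.real {ω | m ≤ |X ω - ∫ x, X x ∂μ|} := measureReal_mono hnone
    _ ≤ Var[X; μ] / m ^ 2 := ENNReal.toReal_le_of_le_ofReal
        (div_nonneg (variance_nonneg X μ) (sq_nonneg m)) (meas_ge_le_variance_div_sq hXmem hm_pos)
    _ ≤ (m + (c - 1) * m ^ 2) / m ^ 2 := by gcongr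
    _ = 1 / m + (c - 1) := by field_simp

end Moments

section BirthTimes

open Finset

/-- The event that at time `p` all members of `A` and no members of `B` are present. -/
def presenceEvent {α : Type*} (A B : Finset α) (p : ℝ) : Set (α → ℝ) :=
  {t | (∀ K ∈ A, t K ≤ p) ∧ ∀ K ∈ B, p < t K}

lemma measurableSet_presenceEvent {α : Type*} (A B : Finset α) (p : ℝ) :
    MeasurableSet (presenceEvent A B p) := by
  have hset : presenceEvent A B p = (⋂ K ∈ A, {t | t K ≤ p}) ∩ ⋂ K ∈ B, {t | p < t K} := by
    ext t
    simp [presenceEvent]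
  rw [hset]
  exact (A.measurableSet_biInter fun K _ =>
    measurableSet_le (measurable_pi_apply K) measurable_const).inter
    (B.measurableSet_biInter fun K _ => measurableSet_lt measurable_const (measurable_pi_apply K))

lemma presenceEvent_inter {α : Type*} [DecidableEq α] (A A' B B' : Finset α) (p : ℝ) :
    presenceEvent A B p ∩ presenceEvent A' B' p = presenceEvent (A ∪ A') (B ∪ B') p := by
  ext t
  simp only [presenceEvent, Set.mem_inter_iff, Set.mem_ofPred_eq, mem_union, or_imp, forall_and]
  tauto

instance isProbabilityMeasure_restrict_Icc :
    IsProbabilityMeasure (volume.restrict (Set.Icc (0 : ℝ) 1)) := ⟨by simp⟩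

variable {n k j Δ : ℕ} {p p' : ℝ}

instance isProbabilityMeasure_birthMeasure : IsProbabilityMeasure (birthMeasure n) := by
  unfold birthMeasure
  infer_instance

lemma birthMeasure_real_presenceEvent {A B : Finset (Finset (Fin n))} (hAB : Disjoint A B)
    (hp₀ : 0 ≤ p) (hp₁ : p ≤ 1) :
    (birthMeasure n).real (presenceEvent A B p) = p ^ A.card * (1 - p) ^ B.card := by
  have hset : presenceEvent A B p =
      Set.pi ↑(A ∪ B) fun K => if K ∈ A then Set.Iic p else Set.Ioi p := by
    ext t
    simp only [presenceEvent, Set.mem_ofPred_eq, Set.mem_pi, coe_union, Set.mem_union, mem_coe,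
      or_imp, forall_and]
    refine and_congr (forall₂_congr fun K hK => ?_) (forall₂_congr fun K hK => ?_)
    · rw [if_pos hK, Set.mem_Iic]
    · rw [if_neg (disjoint_right.1 hAB hK), Set.mem_Ioi]
  have hborn : (volume.restrict (Set.Icc (0 : ℝ) 1)).real (Set.Iic p) = p := by
    have hIcc : Set.Iic p ∩ Set.Icc 0 1 = Set.Icc 0 p := by
      ext x
      simp only [Set.mem_inter_iff, Set.mem_Iic, Set.mem_Icc]
      exact ⟨fun h => ⟨h.2.1, h.1⟩, fun h => ⟨h.2, h.1, h.2.trans hp₁⟩⟩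
    rw [measureReal_restrict_apply measurableSet_Iic, hIcc, Real.volume_real_Icc_of_le hp₀,
      sub_zero]
  have hunborn : (volume.restrict (Set.Icc (0 : ℝ) 1)).real (Set.Ioi p) = 1 - p := by
    have hIoc : Set.Ioi p ∩ Set.Icc 0 1 = Set.Ioc p 1 := by
      ext x
      simp only [Set.mem_inter_iff, Set.mem_Ioi, Set.mem_Icc, Set.mem_Ioc]
      exact ⟨fun h => ⟨h.1, h.2.2⟩, fun h => ⟨h.1, hp₀.trans h.1.le, h.2⟩⟩
    rw [measureReal_restrict_apply measurableSet_Ioi, hIoc, Real.volume_real_Ioc_of_le hp₁]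
  rw [hset, measureReal_def, birthMeasure, Measure.pi_pi_finset, ENNReal.toReal_prod,
    prod_union hAB]
  refine congr_arg₂ _ (prod_eq_pow_card fun K hK => ?_) (prod_eq_pow_card fun K hK => ?_)
  · rw [if_pos hK]
    exact hborn
  · rw [if_neg (disjoint_right.1 hAB hK)]
    exact hunborn

lemma measurableSet_born (k : ℕ) (p : ℝ) (Φ : Finset (Finset (Fin n)) → Prop) :
    MeasurableSet {t : Finset (Fin n) → ℝ | Φ (born k t p)} := by
  have hmem : ∀ K : Finset (Fin n), MeasurableSet {t : Finset (Fin n) → ℝ | K ∈ born k t p} := by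
    intro K
    simp only [mem_born]
    exact (MeasurableSet.const _).inter
      (measurableSet_le (measurable_pi_apply K) measurable_const)
  have hset : {t : Finset (Fin n) → ℝ | Φ (born k t p)} =
      ⋃ B ∈ {B | Φ B}, ⋂ K, {t | K ∈ born k t p ↔ K ∈ B} := by
    ext t
    simp only [Set.mem_iUnion, Set.mem_iInter, Set.mem_ofPred_eq, exists_prop, ← Finset.ext_iff,
      exists_eq_right']
  rw [hset]
  exact .biUnion (Set.to_countable _) fun B _ => .iInter fun K => (hmem K).iff (.const _)

lemma dependsOn_filter_born [Fintype V] (k : ℕ) (p : ℝ) (q : Finset V → Prop) [DecidablePred q] :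
    DependsOn (fun t => {K ∈ born k t p | q K}) {K | q K} := fun t t' h => by
  ext K
  simp only [mem_filter, mem_born]
  exact and_congr_left fun hK => by rw [h K hK]

lemma DegreeLE.of_filter_not {B : Finset (Finset V)} {q : Finset V → Prop} [DecidablePred q]
    [DecidablePred fun K => ¬ q K] {Δ' : ℕ} (hq : DegreeLE {K ∈ B | q K} j Δ)
    (hnq : DegreeLE {K ∈ B | ¬ q K} j Δ') : DegreeLE B j (Δ + Δ') := fun σ hσ => by
  calc #{K ∈ B | σ ⊆ K} = #{K ∈ {K ∈ B | q K} | σ ⊆ K} + #{K ∈ {K ∈ B | ¬ q K} | σ ⊆ K} := by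
        rw [← card_filter_add_card_filter_not q]
        congr 2 <;> grind
    _ ≤ Δ + Δ' := Nat.add_le_add (hq σ hσ) (hnq σ hσ)

lemma birthMeasure_real_inter_of_dependsOn {D : Set (Finset (Fin n))}
    {E F : Set (Finset (Fin n) → ℝ)} (hE : MeasurableSet E) (hF : MeasurableSet F)
    (hED : DependsOn (· ∈ E) Dᶜ) (hFD : DependsOn (· ∈ F) D) :
    (birthMeasure n).real (E ∩ F) = (birthMeasure n).real E * (birthMeasure n).real F := by
  simp only [measureReal_def, ← ENNReal.toReal_mul, birthMeasure]
  rw [measure_pi_inter_of_dependsOn _ hE hF hED hFD]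

lemma birthMeasure_real_avoid_connected_le (hp₀ : 0 ≤ p) (hp₁ : p ≤ 1)
    (hdeg : 1 / 2 ≤ (birthMeasure n).real {t | DegreeLE (born k t p') j Δ})
    (D S : Finset (Finset (Fin n))) :
    (birthMeasure n).real {t | (∀ K ∈ D, p < t K) ∧
        RelConnected (LinkedBy ↑({K ∈ born k t p' | K ∉ D} : Finset (Finset (Fin n)))) S ∧
        DegreeLE {K ∈ born k t p' | K ∉ D} j Δ} ≤
      2 * (1 - p) ^ D.card * (birthMeasure n).real
        {t | RelConnected (LinkedBy ↑(born k t p')) S ∧ DegreeLE (born k t p') j (2 * Δ)} := by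
  set μ := birthMeasure n
  let Φ : Finset (Finset (Fin n)) → Prop := fun B =>
    RelConnected (LinkedBy (B : Set (Finset (Fin n)))) S ∧ DegreeLE B j Δ
  let E := {t : Finset (Fin n) → ℝ | Φ {K ∈ born k t p' | K ∉ D}}
  let Q := {t : Finset (Fin n) → ℝ | DegreeLE {K ∈ born k t p' | K ∈ D} j Δ}
  have hE : MeasurableSet E := measurableSet_born k p' fun B => Φ {K ∈ B | K ∉ D}
  have hED : DependsOn (· ∈ E) (D : Set (Finset (Fin n)))ᶜ := fun t t' h =>
    congr_arg Φ (dependsOn_filter_born k p' (· ∉ D) h)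
  have hindepQ : μ.real (E ∩ Q) = μ.real E * μ.real Q :=
    birthMeasure_real_inter_of_dependsOn hE
      (measurableSet_born k p' fun B => DegreeLE {K ∈ B | K ∈ D} j Δ) hED
      fun t t' h => congr_arg (DegreeLE · j Δ) (dependsOn_filter_born k p' (· ∈ D) h)
  have hindepF : μ.real (E ∩ presenceEvent ∅ D p) = μ.real E * (1 - p) ^ D.card := by
    rw [birthMeasure_real_inter_of_dependsOn hE (measurableSet_presenceEvent ∅ D p) hED
        fun t t' h =>
        propext (and_congr (by simp) (forall₂_congr fun K hK => by rw [h K hK])),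
      birthMeasure_real_presenceEvent (disjoint_empty_left D) hp₀ hp₁, card_empty, pow_zero,
      one_mul]
  have hhalf : 1 / 2 ≤ μ.real Q :=
    hdeg.trans (measureReal_mono fun t ht => DegreeLE.mono ht (filter_subset _ _))
  have hsub : E ∩ Q ⊆ {t | RelConnected (LinkedBy ↑(born k t p')) S ∧
      DegreeLE (born k t p') j (2 * Δ)} := fun t ⟨⟨hconn, hout⟩, hin⟩ =>
    ⟨hconn.mono fun _ _ => LinkedBy.mono (coe_subset.2 (filter_subset _ _)),
      two_mul Δ ▸ DegreeLE.of_filter_not hin hout⟩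
  have hpow : 0 ≤ (1 - p) ^ D.card := pow_nonneg (sub_nonneg.2 hp₁) _
  calc μ.real _ ≤ μ.real (E ∩ presenceEvent ∅ D p) :=
        measureReal_mono fun t ht => ⟨ht.2, by simp, ht.1⟩
    _ = (1 - p) ^ D.card * μ.real E := by rw [hindepF, mul_comm]
    _ ≤ (1 - p) ^ D.card * (2 * μ.real (E ∩ Q)) :=
        mul_le_mul_of_nonneg_left (by nlinarith [measureReal_nonneg (μ := μ) (s := E)]) hpow
    _ = 2 * (1 - p) ^ D.card * μ.real (E ∩ Q) := by ring
    _ ≤ 2 * (1 - p) ^ D.card * _ :=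
        mul_le_mul_of_nonneg_left (measureReal_mono hsub) (by positivity)

end BirthTimes

section Obstructions

open Finset

variable {n k j Δ : ℕ} {p p' x : ℝ}

lemma birthMeasure_real_not_degreeLE_le (hjk : j ≤ k) (hp₀ : 0 ≤ p) (hp₁ : p ≤ 1) :
    (birthMeasure n).real {t | ¬ DegreeLE (born k t p) j Δ} ≤
      n.choose (j + 1) * ((codegree n k (j + 1) * p) ^ (Δ + 1) / (Δ + 1).factorial) := by
  set μ := birthMeasure n
  have hcover : {t : Finset (Fin n) → ℝ | ¬ DegreeLE (born k t p) j Δ} ⊆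
      ⋃ σ ∈ powersetCard (j + 1) (univ : Finset (Fin n)),
        ⋃ R ∈ powersetCard (Δ + 1) (simplexStar k σ), presenceEvent R ∅ p := fun t ht => by
    simp only [DegreeLE, Set.mem_ofPred_eq, not_forall, not_le] at ht
    obtain ⟨σ, hσ, hcard⟩ := ht
    obtain ⟨R, hR, hRcard⟩ := exists_subset_card_eq (Nat.succ_le_of_lt hcard)
    have hRmem : ∀ K ∈ R, (K.card = k + 1 ∧ t K ≤ p) ∧ σ ⊆ K := fun K hK => by
      simpa only [mem_filter, mem_born] using hR hK
    simp only [Set.mem_iUnion, exists_prop]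
    exact ⟨σ, mem_powersetCard_univ.2 hσ, R, mem_powersetCard.2
      ⟨fun K hK => mem_simplexStar.2 ⟨(hRmem K hK).1.1, (hRmem K hK).2⟩, hRcard⟩,
      fun K hK => (hRmem K hK).1.2, by simp⟩
  have hσ : ∀ σ ∈ powersetCard (j + 1) (univ : Finset (Fin n)),
      μ.real (⋃ R ∈ powersetCard (Δ + 1) (simplexStar k σ), presenceEvent R ∅ p) ≤
        (codegree n k (j + 1) * p) ^ (Δ + 1) / (Δ + 1).factorial := fun σ hσ => by
    calc μ.real (⋃ R ∈ powersetCard (Δ + 1) (simplexStar k σ), presenceEvent R ∅ p)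
        ≤ ∑ R ∈ powersetCard (Δ + 1) (simplexStar k σ), μ.real (presenceEvent R ∅ p) :=
          measureReal_biUnion_finset_le _ _
      _ = ∑ _ ∈ powersetCard (Δ + 1) (simplexStar k σ), p ^ (Δ + 1) := sum_congr rfl fun R hR => by
          rw [birthMeasure_real_presenceEvent (disjoint_empty_right R) hp₀ hp₁,
            (mem_powersetCard.1 hR).2, card_empty, pow_zero, mul_one]
      _ = (codegree n k (j + 1)).choose (Δ + 1) * p ^ (Δ + 1) := by
          rw [sum_const, card_powersetCard, card_simplexStar (by grind),
            (mem_powersetCard.1 hσ).2, Fintype.card_fin, nsmul_eq_mul]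
      _ ≤ (codegree n k (j + 1) : ℝ) ^ (Δ + 1) / (Δ + 1).factorial * p ^ (Δ + 1) := by
          gcongr
          exact Nat.choose_le_pow_div _ _
      _ = (codegree n k (j + 1) * p) ^ (Δ + 1) / (Δ + 1).factorial := by ring
  calc μ.real {t | ¬ DegreeLE (born k t p) j Δ}
      ≤ ∑ σ ∈ powersetCard (j + 1) univ,
          μ.real (⋃ R ∈ powersetCard (Δ + 1) (simplexStar k σ), presenceEvent R ∅ p) :=
        (measureReal_mono hcover (measure_ne_top _ _)).trans (measureReal_biUnion_finset_le _ _)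
    _ ≤ _ := (sum_le_sum hσ).trans_eq (by simp)

/-- The event that some minimal support remains an obstruction at time `p`, in the sense that none
of its blockers is present. -/
def obstructionEvent (k j n : ℕ) (p : ℝ) : Set (Finset (Fin n) → ℝ) :=
  {t | ∃ S, IsMinimalSupport j S ∧ S.Nonempty ∧ ∀ K ∈ blockers k j S, p < t K}

/-- The event that some minimal support with at least `k - j + 2` elements, that is, larger than a
flower, has no blocker present at time `p` and is connected through the simplices present at time
`p'`, blockers excluded. -/
def connectedObstructionEvent (k j n : ℕ) (p p' : ℝ) : Set (Finset (Fin n) → ℝ) :=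
  {t | ∃ S, IsMinimalSupport j S ∧ k - j + 2 ≤ S.card ∧ (∀ K ∈ blockers k j S, p < t K) ∧
    RelConnected
      (LinkedBy ↑({K ∈ born k t p' | K ∉ blockers k j S} : Finset (Finset (Fin n)))) S}

lemma birthMeasure_real_obstructionEvent_le (hp₀ : 0 ≤ p) (hp₁ : p ≤ 1) (hx : 0 ≤ x)
    (hblock : ∀ S : Finset (Finset (Fin n)), IsMinimalSupport j S →
      (1 - p) ^ (blockers k j S).card ≤ x ^ S.card) :
    (birthMeasure n).real (obstructionEvent k j n p) ≤ (1 + x) ^ n.choose (j + 1) - 1 := by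
  set μ := birthMeasure n
  set faces : Finset (Finset (Fin n)) := powersetCard (j + 1) univ with hfaces
  have hcover : obstructionEvent k j n p ⊆
      ⋃ S ∈ {S ∈ faces.powerset.erase ∅ | IsMinimalSupport j S},
        presenceEvent ∅ (blockers k j S) p := fun t ⟨S, hS, hne, hfree⟩ => by
    simp only [Set.mem_iUnion, exists_prop, mem_filter, mem_erase, mem_powerset]
    exact ⟨S, ⟨⟨hne.ne_empty, fun σ hσ => mem_powersetCard_univ.2 (hS.card_eq σ hσ)⟩, hS⟩,
      by simp, hfree⟩
  calc μ.real (obstructionEvent k j n p)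
      ≤ ∑ S ∈ faces.powerset.erase ∅ with IsMinimalSupport j S,
          μ.real (presenceEvent ∅ (blockers k j S) p) :=
        (measureReal_mono hcover (measure_ne_top _ _)).trans (measureReal_biUnion_finset_le _ _)
    _ ≤ ∑ S ∈ faces.powerset.erase ∅ with IsMinimalSupport j S, x ^ S.card :=
        sum_le_sum fun S hS => by
          rw [birthMeasure_real_presenceEvent (disjoint_empty_left _) hp₀ hp₁, card_empty, pow_zero,
            one_mul]
          exact hblock S (mem_filter.1 hS).2
    _ ≤ ∑ S ∈ faces.powerset.erase ∅, x ^ S.card :=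
        sum_le_sum_of_subset_of_nonneg (filter_subset _ _) fun S _ _ => pow_nonneg hx _
    _ = (1 + x) ^ n.choose (j + 1) - 1 := by
        have hbinom := sum_pow_mul_eq_add_pow x 1 faces
        rw [hfaces, card_powersetCard, card_univ, Fintype.card_fin, ← hfaces,
          ← add_sum_erase _ _ (empty_mem_powerset faces)] at hbinom
        simp only [one_pow, mul_one, card_empty, pow_zero] at hbinom
        rw [add_comm 1 x, ← hbinom]
        ring

lemma connectedObstructionEvent_subset (k j n Δ : ℕ) (p p' : ℝ) :
    connectedObstructionEvent k j n p p' ⊆ {t | ¬ DegreeLE (born k t p') j Δ} ∪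
      ⋃ s ∈ Icc (k - j + 2) (n.choose (j + 1)),
        ⋃ S ∈ {S ∈ powersetCard s (powersetCard (j + 1) (univ : Finset (Fin n))) |
            IsMinimalSupport j S},
          {t | (∀ K ∈ blockers k j S, p < t K) ∧
            RelConnected
              (LinkedBy ↑({K ∈ born k t p' | K ∉ blockers k j S} : Finset (Finset (Fin n)))) S ∧
            DegreeLE {K ∈ born k t p' | K ∉ blockers k j S} j Δ} := fun t ⟨S, hS, hcard, ht⟩ => by
  by_cases hdeg : DegreeLE (born k t p') j Δ
  · have hfaces : S ⊆ powersetCard (j + 1) univ := fun σ hσ =>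
      mem_powersetCard_univ.2 (hS.card_eq σ hσ)
    refine Or.inr ?_
    simp only [Set.mem_iUnion, exists_prop, mem_filter]
    exact ⟨S.card, mem_Icc.2 ⟨hcard, by simpa using card_le_card hfaces⟩, S,
      ⟨mem_powersetCard.2 ⟨hfaces, rfl⟩, hS⟩, ht.1, ht.2, hdeg.mono (filter_subset _ _)⟩
  · exact Or.inl hdeg

lemma sum_birthMeasure_real_connected_le {s : ℕ} (hs : 1 ≤ s)
    {Y : Finset (Finset (Finset (Fin n)))} (hY : Y ⊆ powersetCard s (powersetCard (j + 1) univ)) :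
    ∑ S ∈ Y, (birthMeasure n).real
        {t | RelConnected (LinkedBy ↑(born k t p')) S ∧ DegreeLE (born k t p') j Δ} ≤
      n.choose (j + 1) * (Δ * (k + 1).choose (j + 1)) ^ (2 * (s - 1)) := by
  refine sum_measureReal_le_of_card_le (fun S _ => measurableSet_born k p'
    fun B : Finset (Finset (Fin n)) =>
      RelConnected (LinkedBy (↑B : Set (Finset (Fin n)))) S ∧ DegreeLE B j Δ) fun t => ?_
  by_cases hdeg : DegreeLE (born k t p') j Δ
  · have hcount := hdeg.card_filter_relConnected_le (fun K hK => (mem_born.1 hK).1) hs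
    rw [Fintype.card_fin] at hcount
    refine (Nat.cast_le.2 ((card_le_card fun S hS => ?_).trans hcount)).trans_eq (by push_cast; rfl)
    exact mem_filter.2 ⟨hY (mem_filter.1 hS).1, (mem_filter.1 hS).2.1⟩
  · rw [filter_eq_empty_iff.2 fun S _ hS => hdeg hS.2, card_empty, Nat.cast_zero]
    positivity

lemma birthMeasure_real_connectedObstructionEvent_le (hp₀ : 0 ≤ p) (hp₁ : p ≤ 1) {h : ℕ → ℝ}
    (hh : ∀ s, 0 ≤ h s)
    (hdeg : 1 / 2 ≤ (birthMeasure n).real {t | DegreeLE (born k t p') j Δ})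
    (hblock : ∀ S : Finset (Finset (Fin n)), IsMinimalSupport j S →
      (1 - p) ^ (blockers k j S).card ≤ h S.card) :
    (birthMeasure n).real (connectedObstructionEvent k j n p p') ≤
      (birthMeasure n).real {t | ¬ DegreeLE (born k t p') j Δ} +
        ∑ s ∈ Icc (k - j + 2) (n.choose (j + 1)),
          2 * h s * (n.choose (j + 1) *
            ((2 * Δ : ℕ) * (k + 1).choose (j + 1) : ℝ) ^ (2 * (s - 1))) := by
  refine (measureReal_mono (connectedObstructionEvent_subset k j n Δ p p')
    (measure_ne_top _ _)).trans ((measureReal_union_le _ _).trans ?_)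
  refine add_le_add_right ?_ _
  refine (measureReal_biUnion_finset_le _ _).trans (sum_le_sum fun s hs => ?_)
  set Y : Finset (Finset (Finset (Fin n))) :=
    {S ∈ powersetCard s (powersetCard (j + 1) univ) | IsMinimalSupport j S}
  calc _ ≤ ∑ S ∈ Y, 2 * h s * (birthMeasure n).real
          {t | RelConnected (LinkedBy ↑(born k t p')) S ∧ DegreeLE (born k t p') j (2 * Δ)} := by
        refine (measureReal_biUnion_finset_le _ _).trans (sum_le_sum fun S hS => ?_)
        obtain ⟨hScard, hSmin⟩ := mem_filter.1 hS
        rw [mem_powersetCard] at hScard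
        refine (birthMeasure_real_avoid_connected_le hp₀ hp₁ hdeg (blockers k j S) S).trans ?_
        gcongr
        exact hScard.2 ▸ hblock S hSmin
    _ ≤ _ := by
        rw [← mul_sum]
        have := hh s
        gcongr
        exact sum_birthMeasure_real_connected_le (by grind) (filter_subset _ _)

end Obstructions

section FlowerEvents

open Finset

variable {n k j : ℕ} {p : ℝ} {K C K' C' τ : Finset (Fin n)}

/-- The event that `(K,C)` is a copy of `M_j^-` at time `p`: the simplex `K` is present and none of
its rivals is. -/
noncomputable def flowerEvent (k : ℕ) (p : ℝ) (K C : Finset (Fin n)) :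
    Set (Finset (Fin n) → ℝ) :=
  presenceEvent {K} (rivals k K C) p

lemma birthMeasure_real_flowerEvent (hp₀ : 0 ≤ p) (hp₁ : p ≤ 1) (K C : Finset (Fin n)) :
    (birthMeasure n).real (flowerEvent k p K C) = p * (1 - p) ^ (rivals k K C).card := by
  rw [flowerEvent, birthMeasure_real_presenceEvent (disjoint_singleton_left.2 self_notMem_rivals)
    hp₀ hp₁, card_singleton, pow_one]

lemma flowerEvent_inter_eq_empty (hK' : K' ∈ rivals k K C) :
    flowerEvent k p K C ∩ flowerEvent k p K' C' = ∅ :=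
  Set.eq_empty_of_forall_notMem fun _ ht =>
    (ht.1.2 K' hK').not_ge (ht.2.1 K' (mem_singleton_self K'))

lemma disjoint_petals_of_notMem_rivals (hK' : K'.card = k + 1) (hne : K ≠ K') (hCK' : C' ⊆ K')
    (hrival : K' ∉ rivals k K C) : Disjoint (petals K C) (petals K' C') :=
  disjoint_left.2 fun P hP hP' =>
    hrival (mem_rivals.2 ⟨hK', hne.symm, P, hP, subset_of_mem_petals hCK' hP'⟩)

lemma birthMeasure_real_flowerEvent_inter_le (hjk : j < k) (hp₀ : 0 ≤ p) (hp₁ : p ≤ 1)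
    (hK : K.card = k + 1) (hC : C.card = j) (hCK : C ⊆ K) (hK' : K'.card = k + 1)
    (hC' : C'.card = j) (hCK' : C' ⊆ K') (hne : K ≠ K') :
    (birthMeasure n).real (flowerEvent k p K C ∩ flowerEvent k p K' C') *
        (1 - p) ^ ((k - j + 1) ^ 2 * codegree n k (j + 2)) ≤
      (birthMeasure n).real (flowerEvent k p K C) *
        (birthMeasure n).real (flowerEvent k p K' C') := by
  have hq₀ : 0 ≤ 1 - p := sub_nonneg.2 hp₁
  have hq₁ : 1 - p ≤ 1 := sub_le_self 1 hp₀
  by_cases hrival : K' ∈ rivals k K C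
  · rw [flowerEvent_inter_eq_empty hrival, measureReal_empty, zero_mul]
    positivity
  by_cases hrival' : K ∈ rivals k K' C'
  · rw [Set.inter_comm, flowerEvent_inter_eq_empty hrival', measureReal_empty, zero_mul]
    positivity
  have hcommon := card_rivals_inter_le hjk hK hC hCK hK' hC' hCK'
    (disjoint_petals_of_notMem_rivals hK' hne hCK' hrival)
  rw [Fintype.card_fin] at hcommon
  have hdisj : Disjoint ({K} ∪ {K'}) (rivals k K C ∪ rivals k K' C') := by
    simp only [disjoint_union_left, disjoint_singleton_left, mem_union, not_or]
    exact ⟨⟨self_notMem_rivals, hrival'⟩, hrival, self_notMem_rivals⟩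
  rw [birthMeasure_real_flowerEvent hp₀ hp₁, birthMeasure_real_flowerEvent hp₀ hp₁, flowerEvent,
    flowerEvent, presenceEvent_inter, birthMeasure_real_presenceEvent hdisj hp₀ hp₁,
    card_union_of_disjoint (disjoint_singleton.2 hne), card_singleton, card_singleton]
  calc p ^ (1 + 1) * (1 - p) ^ (rivals k K C ∪ rivals k K' C').card *
          (1 - p) ^ ((k - j + 1) ^ 2 * codegree n k (j + 2))
      ≤ p ^ (1 + 1) * (1 - p) ^ (rivals k K C ∪ rivals k K' C').card *
          (1 - p) ^ (rivals k K C ∩ rivals k K' C').card :=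
        mul_le_mul_of_nonneg_left (pow_le_pow_of_le_one hq₀ hq₁ hcommon) (by positivity)
    _ = p ^ (1 + 1) * ((1 - p) ^ (rivals k K C).card * (1 - p) ^ (rivals k K' C').card) := by
        rw [mul_assoc, ← pow_add (1 - p), card_union_add_card_inter, pow_add (1 - p)]
    _ = _ := by ring

lemma birthMeasure_real_forall_notMem_flowerEvent_le (hjk : j < k) (hn : k + 1 ≤ n) (hp₀ : 0 < p)
    (hp₁ : p < 1) {C : Finset (Fin n) → Finset (Fin n)}
    (hC : ∀ K ∈ powersetCard (k + 1) univ, C K ⊆ K ∧ (C K).card = j) :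
    (birthMeasure n).real {t | ∀ K ∈ powersetCard (k + 1) univ, t ∉ flowerEvent k p K (C K)} ≤
      1 / (n.choose (k + 1) * (p * (1 - p) ^ ((k - j + 1) * codegree n k (j + 1)))) +
        (1 / (1 - p) ^ ((k - j + 1) ^ 2 * codegree n k (j + 2)) - 1) := by
  have hq : 0 < 1 - p := sub_pos.2 hp₁
  set μ := birthMeasure n
  set simplices : Finset (Finset (Fin n)) := powersetCard (k + 1) univ
  set E : Finset (Fin n) → Set (Finset (Fin n) → ℝ) := fun K => flowerEvent k p K (C K)
  set q := (1 - p) ^ ((k - j + 1) ^ 2 * codegree n k (j + 2))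
  set m := ∑ K ∈ simplices, μ.real (E K) with hm
  have hmean : n.choose (k + 1) * (p * (1 - p) ^ ((k - j + 1) * codegree n k (j + 1))) ≤ m := by
    have hcard : (simplices.card : ℝ) = n.choose (k + 1) := by simp [simplices]
    rw [← hcard, ← nsmul_eq_mul]
    refine card_nsmul_le_sum _ _ _ fun K hK => ?_
    have hrivals := card_rivals_le hjk (mem_powersetCard_univ.1 hK) (hC K hK).2 (hC K hK).1
    rw [Fintype.card_fin] at hrivals
    rw [birthMeasure_real_flowerEvent hp₀.le hp₁.le]
    exact mul_le_mul_of_nonneg_left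
      (pow_le_pow_of_le_one hq.le (sub_le_self 1 hp₀.le) hrivals) hp₀.le
  have hchoose : (0 : ℝ) < n.choose (k + 1) := Nat.cast_pos.2 (Nat.choose_pos hn)
  have hpair : ∀ K ∈ simplices, ∀ K' ∈ simplices, μ.real (E K ∩ E K') ≤
      (if K = K' then μ.real (E K) else 0) + 1 / q * (μ.real (E K) * μ.real (E K')) := by
    intro K hK K' hK'
    split_ifs with heq
    · rw [← heq, Set.inter_self]
      exact le_add_of_nonneg_right (by positivity)
    · rw [zero_add, one_div, inv_mul_eq_div, le_div_iff₀ (by positivity)]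
      exact birthMeasure_real_flowerEvent_inter_le hjk hp₀.le hp₁.le (mem_powersetCard_univ.1 hK)
        (hC K hK).2 (hC K hK).1 (mem_powersetCard_univ.1 hK') (hC K' hK').2 (hC K' hK').1 heq
  refine (measureReal_forall_notMem_le_of_second_moment
    (fun K _ => measurableSet_presenceEvent _ _ _) hm.symm (lt_of_lt_of_le (by positivity) hmean)
    ((sum_le_sum fun K hK => sum_le_sum (hpair K hK)).trans_eq ?_)).trans
    (add_le_add_left (one_div_le_one_div_of_le (by positivity) hmean) (1 / q - 1))
  simp only [sum_add_distrib, sum_ite_eq, ← mul_sum]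
  rw [← sum_mul, ← hm, sum_ite_mem, inter_self, sq]

lemma birthMeasure_real_flowerEvent_uncovered_le (hjk : j < k) (hp₀ : 0 ≤ p) (hp₁ : p ≤ 1)
    (hK : K.card = k + 1) (hC : C.card = j) (hCK : C ⊆ K) (hτ : τ.card = j + 1)
    (hτC : τ ∉ petals K C) :
    (birthMeasure n).real (flowerEvent k p K C ∩ {t | ∀ L ∈ born k t p, ¬ τ ⊆ L}) *
        (1 - p) ^ ((k - j + 2) ^ 2 * codegree n k (j + 2) + 1) ≤
      p * (1 - p) ^ ((k - j + 2) * codegree n k (j + 1)) := by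
  have hq₀ : 0 ≤ 1 - p := sub_nonneg.2 hp₁
  set S := insert τ (petals K C) with hS
  have hScard : S.card = k - j + 2 := by
    rw [hS, card_insert_of_notMem hτC, card_petals hCK]
    lia
  have hSfaces : ∀ σ ∈ S, σ.card = j + 1 :=
    forall_mem_insert _ _ _ |>.2 ⟨hτ, fun P hP => card_of_mem_petals hC hP⟩
  have hhit := card_mul_codegree_le_card_uniquelyHit_add hjk hSfaces
  rw [hScard, Fintype.card_fin] at hhit
  have hsub : flowerEvent k p K C ∩ {t | ∀ L ∈ born k t p, ¬ τ ⊆ L} ⊆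
      presenceEvent {K} ((uniquelyHit k S).erase K) p := fun t ⟨hflower, huncovered⟩ => by
    refine ⟨hflower.1, fun L hL => ?_⟩
    obtain ⟨hLK, hLcard, hLhit⟩ : L ≠ K ∧ L.card = k + 1 ∧ #{σ ∈ S | σ ⊆ L} = 1 := by
      convert (by simpa [uniquelyHit] using hL : ¬ L = K ∧ L.card = k + 1 ∧ _)
    obtain ⟨σ, hσ⟩ := card_pos.1 (hLhit.symm ▸ one_pos)
    obtain ⟨hσS, hσL⟩ := mem_filter.1 hσ
    rcases mem_insert.1 hσS with rfl | hσC
    · by_contra hborn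
      exact huncovered L (mem_born.2 ⟨hLcard, not_lt.1 hborn⟩) hσL
    · exact hflower.2 L (mem_rivals.2 ⟨hLcard, hLK, σ, hσC, hσL⟩)
  calc _ ≤ p ^ 1 * (1 - p) ^ ((uniquelyHit k S).erase K).card *
        (1 - p) ^ ((k - j + 2) ^ 2 * codegree n k (j + 2) + 1) := by
        rw [← card_singleton K, ← birthMeasure_real_presenceEvent (by simp) hp₀ hp₁]
        exact mul_le_mul_of_nonneg_right (measureReal_mono hsub) (by positivity)
    _ ≤ p * (1 - p) ^ ((k - j + 2) * codegree n k (j + 1)) := by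
        rw [pow_one, mul_assoc, ← pow_add]
        refine mul_le_mul_of_nonneg_left
          (pow_le_pow_of_le_one hq₀ (sub_le_self 1 hp₀) ?_) hp₀
        have := pred_card_le_card_erase (s := uniquelyHit k S) (a := K)
        lia

/-- The event that `(K,C)` is a copy of `M_j^-` at time `p` but some `j`-face of the shell on
`C ∪ {w, a}` other than the petal `C ∪ {w}` lies in no `k`-simplex. -/
def uncoveredShellEvent (k : ℕ) (p : ℝ) (K C : Finset (Fin n)) (w a : Fin n) :
    Set (Finset (Fin n) → ℝ) :=
  flowerEvent k p K C ∩ {t | ∃ x ∈ insert w C, ∀ L ∈ born k t p,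
    ¬ (insert a (insert w C)).erase x ⊆ L}

lemma birthMeasure_real_uncoveredShellEvent_le {w a : Fin n} (hjk : j < k) (hp₀ : 0 ≤ p)
    (hp₁ : p < 1) (hK : K.card = k + 1) (hC : C.card = j) (hCK : C ⊆ K) (hw : w ∈ K \ C)
    (ha : a ∉ K) :
    (birthMeasure n).real (uncoveredShellEvent k p K C w a) ≤
      (j + 1 : ℕ) * (p * (1 - p) ^ ((k - j + 2) * codegree n k (j + 1)) /
        (1 - p) ^ ((k - j + 2) ^ 2 * codegree n k (j + 2) + 1)) := by
  obtain ⟨hwK, hwC⟩ := mem_sdiff.1 hw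
  have hPcard : (insert w C).card = j + 1 := by rw [card_insert_of_notMem hwC, hC]
  have haP : a ∉ insert w C := fun h => ha (insert_subset hwK hCK h)
  have hunion : uncoveredShellEvent k p K C w a = ⋃ x ∈ insert w C,
      flowerEvent k p K C ∩ {t | ∀ L ∈ born k t p, ¬ (insert a (insert w C)).erase x ⊆ L} := by
    ext t
    simp only [uncoveredShellEvent, Set.mem_inter_iff, Set.mem_ofPred_eq, Set.mem_iUnion,
      exists_prop]
    tauto
  rw [hunion, ← nsmul_eq_mul]
  refine (measureReal_biUnion_finset_le _ _).trans
    ((sum_le_card_nsmul _ _ _ fun x hx => ?_).trans_eq (congrArg (· • _) hPcard))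
  rw [le_div_iff₀ (pow_pos (sub_pos.2 hp₁) _)]
  refine birthMeasure_real_flowerEvent_uncovered_le hjk hp₀ hp₁.le hK hC hCK ?_ fun hτ =>
    ha (subset_of_mem_petals hCK hτ ?_)
  · rw [card_erase_of_mem (mem_insert_of_mem hx), card_insert_of_notMem haP, hPcard,
      Nat.add_sub_cancel]
  · exact mem_erase.2 ⟨fun h => haP (h ▸ hx), mem_insert_self _ _⟩

lemma isMj_of_mem_flowerEvent {w a : Fin n} {t : Finset (Fin n) → ℝ} (hj : 1 ≤ j) (hk : 1 ≤ k)
    (hK : K.card = k + 1) (hC : C.card = j) (hCK : C ⊆ K) (hw : w ∈ K \ C) (ha : a ∉ K)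
    (ht : t ∈ flowerEvent k p K C) (hcov : t ∉ uncoveredShellEvent k p K C w a) :
    IsMj (complexAt k n t p) k j K C (powersetCard (j + 1) (insert a (insert w C))) := by
  obtain ⟨hwK, hwC⟩ := mem_sdiff.1 hw
  have hPK : insert w C ⊆ K := insert_subset hwK hCK
  have haP : a ∉ insert w C := fun h => ha (hPK h)
  have hKborn : K ∈ born k t p := mem_born.2 ⟨hK, ht.1 K (mem_singleton_self K)⟩
  have hcomplex := isKComplex_complexAt (k := k) (t := t) (p := p)
  have hKsimplex := (isSimplex_complexAt_iff hk).2 hKborn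
  refine IsMjStar.isMj ⟨isMjMinus_of_rivals hcomplex hKsimplex hCK hC hj fun L hL hLsimplex => ?_,
    hw, ha, isShell_of_faces hcomplex hKsimplex.1 hPK (by rw [card_insert_of_notMem hwC, hC]) haP
      fun x hx => ?_⟩
  · exact (ht.2 L hL).not_ge (mem_born.1 ((isSimplex_complexAt_iff hk).1 hLsimplex)).2
  · by_contra hface
    refine hcov ⟨ht, x, hx, fun L hL hsub => hface ?_⟩
    exact mem_complexAt_of_subset hL hsub
      ⟨a, mem_erase.2 ⟨fun h => haP (h ▸ hx), mem_insert_self _ _⟩⟩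

lemma exists_center_petal_apex (hjk : j < k) (hn : k + 2 ≤ n) (hK : K.card = k + 1) :
    ∃ (C : Finset (Fin n)) (w a : Fin n), C ⊆ K ∧ C.card = j ∧ w ∈ K \ C ∧ a ∉ K := by
  obtain ⟨C, hCK, hC⟩ := exists_subset_card_eq (show j ≤ K.card by lia)
  obtain ⟨w, hw⟩ : (K \ C).Nonempty := card_pos.1 (by rw [card_sdiff_of_subset hCK]; lia)
  obtain ⟨a, ha⟩ : Kᶜ.Nonempty := card_pos.1 (by rw [card_compl, Fintype.card_fin]; lia)
  exact ⟨C, w, a, hCK, hC, hw, mem_compl.1 ha⟩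

lemma birthMeasure_real_not_exists_isMj_le (hj : 1 ≤ j) (hjk : j < k) (hn : k + 2 ≤ n)
    (hp₀ : 0 < p) (hp₁ : p < 1) :
    (birthMeasure n).real {t | ¬ ∃ K C J, IsMj (complexAt k n t p) k j K C J} ≤
      1 / (n.choose (k + 1) * (p * (1 - p) ^ ((k - j + 1) * codegree n k (j + 1)))) +
      (1 / (1 - p) ^ ((k - j + 1) ^ 2 * codegree n k (j + 2)) - 1) +
      n.choose (k + 1) * ((j + 1 : ℕ) * (p * (1 - p) ^ ((k - j + 2) * codegree n k (j + 1)) /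
        (1 - p) ^ ((k - j + 2) ^ 2 * codegree n k (j + 2) + 1))) := by
  have : Nonempty (Fin n) := ⟨⟨0, by lia⟩⟩
  have hchoice := fun K (hK : K ∈ powersetCard (k + 1) (univ : Finset (Fin n))) =>
    exists_center_petal_apex hjk hn (mem_powersetCard_univ.1 hK)
  choose! C w a hCwa using hchoice
  have hcover : {t | ¬ ∃ K C J, IsMj (complexAt k n t p) k j K C J} ⊆
      {t | ∀ K ∈ powersetCard (k + 1) univ, t ∉ flowerEvent k p K (C K)} ∪
        ⋃ K ∈ powersetCard (k + 1) univ, uncoveredShellEvent k p K (C K) (w K) (a K) := by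
    refine fun t ht => or_iff_not_imp_left.2 fun hflower => ?_
    simp only [Set.mem_ofPred_eq, not_forall, not_not] at hflower
    obtain ⟨K, hK, hflower⟩ := hflower
    obtain ⟨hCK, hC, hw, ha⟩ := hCwa K hK
    by_contra hcov
    simp only [Set.mem_iUnion, not_exists] at hcov
    exact ht ⟨K, C K, _, isMj_of_mem_flowerEvent hj (by lia) (mem_powersetCard_univ.1 hK) hC hCK
      hw ha hflower (hcov K hK)⟩
  have hcard : (#(powersetCard (k + 1) (univ : Finset (Fin n))) : ℝ) = n.choose (k + 1) := by simp
  refine (measureReal_mono hcover (measure_ne_top _ _)).trans ((measureReal_union_le _ _).trans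
    (add_le_add (birthMeasure_real_forall_notMem_flowerEvent_le hjk (by lia) hp₀ hp₁
      fun K hK => ⟨(hCwa K hK).1, (hCwa K hK).2.1⟩) ?_))
  rw [← hcard, ← nsmul_eq_mul]
  refine (measureReal_biUnion_finset_le _ _).trans (sum_le_card_nsmul _ _ _ fun K hK => ?_)
  obtain ⟨hCK, hC, hw, ha⟩ := hCwa K hK
  exact birthMeasure_real_uncoveredShellEvent_le hjk hp₀.le hp₁ (mem_powersetCard_univ.1 hK)
    hC hCK hw ha

end FlowerEvents

section LogScale

variable {k j n : ℕ} {g : ℝ}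

lemma one_sub_pow_le_exp {p : ℝ} (hp : p ≤ 1) (m : ℕ) : (1 - p) ^ m ≤ Real.exp (-(p * m)) :=
  calc (1 - p) ^ m ≤ Real.exp (-p) ^ m :=
        pow_le_pow_left₀ (sub_nonneg.2 hp) (Real.one_sub_le_exp_neg p) m
    _ = Real.exp (-(p * m)) := by rw [← Real.exp_nat_mul]; ring_nf

lemma exp_le_one_sub_pow {p : ℝ} (hp : p < 1) (m : ℕ) :
    Real.exp (-(p / (1 - p) * m)) ≤ (1 - p) ^ m := by
  have hp' : 0 < 1 - p := sub_pos.2 hp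
  have hinv : (1 - p)⁻¹ ≤ Real.exp (p / (1 - p)) :=
    (Real.add_one_le_exp (p / (1 - p))).trans_eq' (by field_simp; ring)
  calc Real.exp (-(p / (1 - p) * m)) = Real.exp (-(p / (1 - p))) ^ m := by
        rw [← Real.exp_nat_mul]; ring_nf
    _ ≤ (1 - p) ^ m := by
        rw [Real.exp_neg]
        exact pow_le_pow_left₀ (inv_nonneg.2 (Real.exp_pos _).le) (inv_le_of_inv_le₀ hp' hinv) m

lemma choose_le_exp_mul_log (hn : 0 < n) (r : ℕ) :
    (n.choose r : ℝ) ≤ Real.exp (r * Real.log n) := by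
  rw [Real.exp_nat_mul, Real.exp_log (Nat.cast_pos.2 hn)]
  exact_mod_cast Nat.choose_le_pow n r

lemma exp_mul_log_le_mul_choose {r : ℕ} (hn : 0 < n) (hr : 2 * r ≤ n) :
    Real.exp (r * Real.log n) ≤ 2 ^ r * r.factorial * n.choose r := by
  rw [Real.exp_nat_mul, Real.exp_log (Nat.cast_pos.2 hn)]
  norm_cast
  calc n ^ r ≤ (2 * (n + 1 - r)) ^ r := Nat.pow_le_pow_left (by lia) r
    _ = 2 ^ r * (n + 1 - r) ^ r := mul_pow ..
    _ ≤ 2 ^ r * n.descFactorial r := Nat.mul_le_mul_left _ (Nat.pow_sub_le_descFactorial n r)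
    _ = 2 ^ r * r.factorial * n.choose r := by
        rw [Nat.descFactorial_eq_factorial_mul_choose, mul_assoc]

lemma tendsto_log_natCast_atTop : Tendsto (fun n : ℕ => Real.log n) atTop atTop :=
  Real.tendsto_log_atTop.comp tendsto_natCast_atTop_atTop

lemma tendsto_log_div_sub_nhds_zero (c : ℕ) :
    Tendsto (fun n : ℕ => Real.log n / ((n - c : ℕ) : ℝ)) atTop (nhds 0) := by
  have hlog : Tendsto (fun n : ℕ => 2 * (Real.log n / n)) atTop (nhds 0) := by
    simpa using (Real.isLittleO_log_id_atTop.tendsto_div_nhds_zero.comp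
      tendsto_natCast_atTop_atTop).const_mul 2
  refine squeeze_zero' (Eventually.of_forall fun n => by positivity) ?_ hlog
  filter_upwards [eventually_ge_atTop (2 * c + 1)] with n hn
  have hsub : (n : ℝ) ≤ 2 * (n - c : ℕ) := by exact_mod_cast (by lia : n ≤ 2 * (n - c))
  rw [mul_div_assoc', div_le_div_iff₀ (Nat.cast_pos.2 (by lia)) (Nat.cast_pos.2 (by lia))]
  nlinarith [Real.log_natCast_nonneg n]

lemma tendsto_exp_neg_mul_nhds_zero {δ : ℝ} (hδ : 0 < δ) :
    Tendsto (fun x => Real.exp (-(δ * x))) atTop (nhds 0) :=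
  Real.tendsto_exp_neg_atTop_nhds_zero.comp (tendsto_id.const_mul_atTop hδ)

lemma tendsto_mul_exp_neg_mul_nhds_zero {δ : ℝ} (hδ : 0 < δ) :
    Tendsto (fun x => x * Real.exp (-(δ * x))) atTop (nhds 0) := by
  have h := ((Real.tendsto_pow_mul_exp_neg_atTop_nhds_zero 1).comp
    (tendsto_id.const_mul_atTop hδ)).const_mul δ⁻¹
  rw [mul_zero] at h
  refine h.congr fun x => ?_
  simp only [Function.comp_apply, pow_one, id]
  field_simp

/-- The birth time at which a fixed `j`-simplex lies in `g * log n` of the `k`-simplices of the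
random complex on average. All thresholds of the argument are of this order. -/
noncomputable def scaledTime (k j : ℕ) (g : ℝ) (n : ℕ) : ℝ :=
  g * Real.log n / codegree n k (j + 1)

lemma codegree_pos {c : ℕ} (hn : k + 1 ≤ n) : 0 < codegree n k c :=
  Nat.choose_pos (by lia)

lemma scaledTime_mul_codegree (hn : k + 1 ≤ n) :
    scaledTime k j g n * codegree n k (j + 1) = g * Real.log n :=
  div_mul_cancel₀ _ (Nat.cast_pos.2 (codegree_pos hn)).ne'

lemma scaledTime_mul_codegree_succ (hjk : j < k) (hn : k + 1 ≤ n) :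
    scaledTime k j g n * codegree n k (j + 2) =
      g * (k - j : ℕ) * (Real.log n / (n - (j + 1) : ℕ)) := by
  have hcodegree : ((n - (j + 1) : ℕ) : ℝ) * codegree n k (j + 2) =
      (k - j : ℕ) * codegree n k (j + 1) := by
    have h := sub_mul_codegree_succ n (k := k) (c := j + 1) (by lia)
    rw [show k + 1 - (j + 1) = k - j by lia] at h
    exact_mod_cast h
  have hn' : ((n - (j + 1) : ℕ) : ℝ) ≠ 0 := by
    have : n - (j + 1) ≠ 0 := by lia
    exact_mod_cast this
  rw [scaledTime, mul_div_assoc', div_mul_eq_mul_div,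
    div_eq_div_iff (Nat.cast_pos.2 (codegree_pos hn)).ne' hn']
  linear_combination g * Real.log n * hcodegree

lemma choose_mul_scaledTime (hjk : j < k) (hn : k + 1 ≤ n) :
    n.choose (k + 1) * scaledTime k j g n =
      n.choose (j + 1) * (g * Real.log n) / (k + 1).choose (j + 1) := by
  have hchoose : (n.choose (k + 1) : ℝ) * (k + 1).choose (j + 1) =
      n.choose (j + 1) * codegree n k (j + 1) := by
    exact_mod_cast Nat.choose_mul (n := n) (k := k + 1) (s := j + 1) (by lia)
  rw [scaledTime, mul_div_assoc', div_eq_div_iff (Nat.cast_pos.2 (codegree_pos hn)).ne'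
    (Nat.cast_pos.2 (Nat.choose_pos (by lia))).ne']
  linear_combination g * Real.log n * hchoose

lemma scaledTime_nonneg (hg : 0 ≤ g) : 0 ≤ scaledTime k j g n := by
  unfold scaledTime
  positivity

lemma exp_le_one_sub_scaledTime_pow {m r : ℕ} (hn : k + 1 ≤ n) (hp : scaledTime k j g n < 1)
    (hm : m * g ≤ r * (1 - scaledTime k j g n)) :
    Real.exp (-(r * Real.log n)) ≤ (1 - scaledTime k j g n) ^ (m * codegree n k (j + 1)) := by
  set p := scaledTime k j g n with hpdef
  refine (Real.exp_le_exp.2 (neg_le_neg ?_)).trans (exp_le_one_sub_pow hp _)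
  calc p / (1 - p) * (m * codegree n k (j + 1) : ℕ)
      = m * (p * codegree n k (j + 1)) / (1 - p) := by push_cast; ring
    _ = m * g / (1 - p) * Real.log n := by rw [hpdef, scaledTime_mul_codegree hn]; ring
    _ ≤ r * Real.log n :=
        mul_le_mul_of_nonneg_right ((div_le_iff₀ (sub_pos.2 hp)).2 hm) (Real.log_natCast_nonneg n)

lemma one_sub_scaledTime_pow_le_exp {m : ℕ} (hn : k + 1 ≤ n) (hp : scaledTime k j g n ≤ 1) :
    (1 - scaledTime k j g n) ^ (m * codegree n k (j + 1)) ≤ Real.exp (-(m * g * Real.log n)) := by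
  refine (one_sub_pow_le_exp hp _).trans_eq ?_
  rw [mul_assoc (m : ℝ), ← scaledTime_mul_codegree (k := k) (j := j) hn]
  push_cast
  ring_nf

lemma tendsto_scaledTime_mul_codegree_succ (hjk : j < k) :
    Tendsto (fun n => scaledTime k j g n * codegree n k (j + 2)) atTop (nhds 0) := by
  have h := (tendsto_log_div_sub_nhds_zero (j + 1)).const_mul (g * (k - j : ℕ))
  rw [mul_zero] at h
  refine h.congr' ?_
  filter_upwards [eventually_ge_atTop (k + 1)] with n hn
  rw [scaledTime_mul_codegree_succ hjk hn]

lemma tendsto_scaledTime_nhds_zero (hjk : j < k) (hg : 0 ≤ g) :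
    Tendsto (scaledTime k j g) atTop (nhds 0) := by
  refine squeeze_zero' (Eventually.of_forall fun n => scaledTime_nonneg hg) ?_
    (tendsto_scaledTime_mul_codegree_succ (g := g) hjk)
  filter_upwards [eventually_ge_atTop (k + 1)] with n hn
  exact le_mul_of_one_le_right (scaledTime_nonneg hg) (by exact_mod_cast codegree_pos hn)

lemma eventually_scaledTime_mem_Ioo (hjk : j < k) (hg : 0 < g) :
    ∀ᶠ n in atTop, scaledTime k j g n ∈ Set.Ioo 0 1 := by
  filter_upwards [eventually_ge_atTop (k + 1), tendsto_log_natCast_atTop.eventually_gt_atTop 0,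
    (tendsto_scaledTime_nhds_zero hjk hg.le).eventually_lt_const one_pos] with n hn hlog hlt
  exact ⟨div_pos (mul_pos hg hlog) (Nat.cast_pos.2 (codegree_pos hn)), hlt⟩

end LogScale

section FlowerAsymptotics

variable {k j : ℕ} {g : ℝ}

lemma tendsto_one_sub_scaledTime_pow_nhds_one (hjk : j < k) (hg : 0 < g) (m : ℕ) :
    Tendsto (fun n => (1 - scaledTime k j g n) ^ (m * codegree n k (j + 2))) atTop (nhds 1) := by
  have hlower : Tendsto (fun n => 1 - m * (scaledTime k j g n * codegree n k (j + 2))) atTop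
      (nhds 1) := by
    simpa using ((tendsto_scaledTime_mul_codegree_succ hjk).const_mul (m : ℝ)).const_sub 1
  refine tendsto_of_tendsto_of_tendsto_of_le_of_le' hlower tendsto_const_nhds ?_ ?_
  all_goals filter_upwards [eventually_scaledTime_mem_Ioo hjk hg] with n hp
  · have hbernoulli := one_add_mul_le_pow (a := -scaledTime k j g n) (by linarith [hp.2])
      (m * codegree n k (j + 2))
    rw [← sub_eq_add_neg] at hbernoulli
    refine hbernoulli.trans_eq' ?_
    push_cast
    ring
  · exact pow_le_one₀ (by linarith [hp.2]) (by linarith [hp.1])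

lemma tendsto_choose_mul_scaledTime_mul_pow_atTop {m : ℕ} (hjk : j < k) (hg : 0 < g)
    (hm : m * g < j + 1) :
    Tendsto (fun n : ℕ => n.choose (k + 1) *
      (scaledTime k j g n * (1 - scaledTime k j g n) ^ (m * codegree n k (j + 1))))
      atTop atTop := by
  set a : ℝ := (((k + 1).choose (j + 1) : ℕ) : ℝ)
  set c : ℝ := 2 ^ (j + 1) * (j + 1).factorial
  have ha : 0 < a := Nat.cast_pos.2 (Nat.choose_pos (by lia))
  have hc : 0 < c := by positivity
  have hlimit : Tendsto (fun n : ℕ => g / (a * c) * Real.log n) atTop atTop :=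
    tendsto_log_natCast_atTop.const_mul_atTop (by positivity)
  have hsmall : ∀ᶠ n in atTop, m * g < (j + 1) * (1 - scaledTime k j g n) := by
    have h := ((tendsto_scaledTime_nhds_zero hjk hg.le).const_sub 1).const_mul (j + 1 : ℝ)
    rw [sub_zero, mul_one] at h
    exact h.eventually_const_lt hm
  refine tendsto_atTop_mono' _ ?_ hlimit
  filter_upwards [eventually_ge_atTop (k + 1), eventually_ge_atTop (2 * (j + 1)), hsmall,
    eventually_scaledTime_mem_Ioo hjk hg] with n hn hjn hpm hp
  have hexp := exp_le_one_sub_scaledTime_pow (r := j + 1) hn hp.2 (by exact_mod_cast hpm.le)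
  set p := scaledTime k j g n
  calc g / (a * c) * Real.log n
      = g * Real.log n / (a * c) * (Real.exp ((j + 1 : ℕ) * Real.log n) *
          Real.exp (-((j + 1 : ℕ) * Real.log n))) := by rw [← Real.exp_add]; simp; ring
    _ ≤ g * Real.log n / (a * c) * (c * n.choose (j + 1) *
          (1 - p) ^ (m * codegree n k (j + 1))) := by
        gcongr
        exact exp_mul_log_le_mul_choose (by lia) hjn
    _ = n.choose (j + 1) * (g * Real.log n) / a * (1 - p) ^ (m * codegree n k (j + 1)) := by
        field_simp
    _ = n.choose (k + 1) * (p * (1 - p) ^ (m * codegree n k (j + 1))) := by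
        rw [← choose_mul_scaledTime hjk hn, mul_assoc]

lemma tendsto_choose_mul_scaledTime_mul_pow_nhds_zero {m : ℕ} (hjk : j < k) (hg : 0 < g)
    (hm : j + 1 < m * g) :
    Tendsto (fun n : ℕ => n.choose (k + 1) *
      (scaledTime k j g n * (1 - scaledTime k j g n) ^ (m * codegree n k (j + 1))))
      atTop (nhds 0) := by
  have hlimit := ((tendsto_mul_exp_neg_mul_nhds_zero (sub_pos.2 hm)).comp
    tendsto_log_natCast_atTop).const_mul g
  rw [mul_zero] at hlimit
  refine squeeze_zero' ?_ ?_ hlimit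
  · filter_upwards [eventually_scaledTime_mem_Ioo hjk hg] with n hp
    have hp₀ := hp.1
    have hp₁ := sub_pos.2 hp.2
    positivity
  filter_upwards [eventually_ge_atTop (k + 1), eventually_scaledTime_mem_Ioo hjk hg] with n hn hp
  have hexp := one_sub_scaledTime_pow_le_exp (m := m) hn hp.2.le
  set p := scaledTime k j g n with hpdef
  have hcount : n.choose (k + 1) * p ≤ Real.exp ((j + 1 : ℕ) * Real.log n) * (g * Real.log n) := by
    rw [hpdef, choose_mul_scaledTime hjk hn]
    refine (div_le_self (by positivity) ?_).trans
      (mul_le_mul_of_nonneg_right (choose_le_exp_mul_log (by lia) _) (by positivity))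
    exact_mod_cast Nat.choose_pos (by lia)
  calc n.choose (k + 1) * (p * (1 - p) ^ (m * codegree n k (j + 1)))
      = n.choose (k + 1) * p * (1 - p) ^ (m * codegree n k (j + 1)) := (mul_assoc ..).symm
    _ ≤ Real.exp ((j + 1 : ℕ) * Real.log n) * (g * Real.log n) *
          Real.exp (-(m * g * Real.log n)) :=
        mul_le_mul hcount hexp (pow_nonneg (sub_nonneg.2 hp.2.le) _) (by positivity)
    _ = g * (Real.log n * (Real.exp ((j + 1 : ℕ) * Real.log n) *
          Real.exp (-(m * g * Real.log n)))) := by ring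
    _ = g * (Real.log n * Real.exp (-((m * g - (j + 1)) * Real.log n))) := by
        rw [← Real.exp_add]
        push_cast
        ring_nf

lemma tendsto_birthMeasure_real_not_exists_isMj (hj : 1 ≤ j) (hjk : j < k) (hg : 0 < g)
    (hg₁ : j + 1 < (k - j + 2 : ℕ) * g) (hg₂ : (k - j + 1 : ℕ) * g < j + 1) :
    Tendsto (fun n => (birthMeasure n).real
      {t | ¬ ∃ K C J, IsMj (complexAt k n t (scaledTime k j g n)) k j K C J}) atTop (nhds 0) := by
  have hmean := (tendsto_choose_mul_scaledTime_mul_pow_atTop hjk hg hg₂).const_div_atTop 1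
  have hvariance := ((tendsto_const_nhds (x := (1 : ℝ))).div
    (tendsto_one_sub_scaledTime_pow_nhds_one hjk hg ((k - j + 1) ^ 2)) one_ne_zero).sub_const 1
  have hone := (tendsto_one_sub_scaledTime_pow_nhds_one hjk hg ((k - j + 2) ^ 2)).mul
    ((tendsto_scaledTime_nhds_zero hjk hg.le).const_sub 1)
  have hcover := ((tendsto_choose_mul_scaledTime_mul_pow_nhds_zero hjk hg hg₁).div hone
    (by norm_num)).const_mul ((j + 1 : ℕ) : ℝ)
  have hlimit := (hmean.add hvariance).add hcover
  norm_num at hlimit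
  refine squeeze_zero' (Eventually.of_forall fun n => measureReal_nonneg) ?_ hlimit
  filter_upwards [eventually_ge_atTop (k + 2), eventually_scaledTime_mem_Ioo hjk hg] with n hn hp
  refine (birthMeasure_real_not_exists_isMj_le hj hjk hn hp.1 hp.2).trans_eq ?_
  rw [pow_succ (1 - scaledTime k j g n) ((k - j + 2) ^ 2 * codegree n k (j + 2))]
  push_cast
  ring

end FlowerAsymptotics

section ObstructionAsymptotics

open Finset

/-- The constant `c` for which a minimal support `S` has at least
`S.card * codegree n k (j + 1) / c` blockers. -/
def blockerRatio (k j : ℕ) : ℕ := (j + 2) * (k + 1).choose (j + 2)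

variable {k j n : ℕ} {g : ℝ}

lemma blockerRatio_pos (hjk : j < k) : 0 < blockerRatio k j :=
  Nat.mul_pos (by lia) (Nat.choose_pos (by lia))

lemma one_sub_scaledTime_pow_card_blockers_le_of_card_le {S : Finset (Finset (Fin n))} {S₀ : ℕ}
    (hjk : j < k) (hn : k + 1 ≤ n) (hp₀ : 0 ≤ scaledTime k j g n) (hp₁ : scaledTime k j g n ≤ 1)
    (hS : ∀ σ ∈ S, σ.card = j + 1) (hcard : S.card ≤ S₀)
    (hS₀ : S₀ ^ 2 * (scaledTime k j g n * codegree n k (j + 2)) ≤ 1) :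
    (1 - scaledTime k j g n) ^ (blockers k j S).card ≤
      Real.exp (1 - g * S.card * Real.log n) := by
  have hlog := scaledTime_mul_codegree (j := j) (g := g) hn
  refine (one_sub_pow_le_exp hp₁ _).trans (Real.exp_le_exp.2 ?_)
  set p := scaledTime k j g n
  have hblock : (S.card * codegree n k (j + 1) : ℝ) ≤
      (blockers k j S).card + S.card ^ 2 * codegree n k (j + 2) := by
    have h := card_mul_codegree_le_card_blockers_add hjk hS
    rw [Fintype.card_fin] at h
    exact_mod_cast h
  have hoverlap : (S.card : ℝ) ^ 2 * (p * codegree n k (j + 2)) ≤ 1 :=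
    hS₀.trans' (by gcongr)
  have hsum := mul_le_mul_of_nonneg_left hblock hp₀
  calc -(p * (blockers k j S).card)
      ≤ S.card ^ 2 * (p * codegree n k (j + 2)) - p * (S.card * codegree n k (j + 1)) := by
        linarith
    _ = S.card ^ 2 * (p * codegree n k (j + 2)) - g * S.card * Real.log n := by
        linear_combination (-S.card : ℝ) * hlog
    _ ≤ 1 - g * S.card * Real.log n := by gcongr

lemma IsMinimalSupport.one_sub_scaledTime_pow_card_blockers_le {S : Finset (Finset (Fin n))}
    (hS : IsMinimalSupport j S) (hjk : j < k) (hn : k + 1 ≤ n) (hp₀ : 0 ≤ scaledTime k j g n)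
    (hp₁ : scaledTime k j g n ≤ 1) :
    (1 - scaledTime k j g n) ^ (blockers k j S).card ≤
      Real.exp (-(g / blockerRatio k j * S.card * Real.log n)) := by
  have hlog := scaledTime_mul_codegree (j := j) (g := g) hn
  refine (one_sub_pow_le_exp hp₁ _).trans (Real.exp_le_exp.2 (neg_le_neg ?_))
  set p := scaledTime k j g n
  have hblock : (S.card * codegree n k (j + 1) : ℝ) ≤ blockerRatio k j * (blockers k j S).card := by
    have h := hS.card_mul_codegree_le hjk
    rw [Fintype.card_fin] at h
    exact_mod_cast h
  calc g / blockerRatio k j * S.card * Real.log n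
      = p * (S.card * codegree n k (j + 1)) / blockerRatio k j := by
        linear_combination (-S.card / blockerRatio k j : ℝ) * hlog
    _ ≤ p * (blockers k j S).card := by
        rw [div_le_iff₀ (Nat.cast_pos.2 (blockerRatio_pos hjk))]
        linarith [mul_le_mul_of_nonneg_left hblock hp₀]

lemma choose_mul_pow_div_factorial_le {Δ : ℕ} (hn : k + 1 ≤ n) (hg : 0 ≤ g)
    (hΔ : (Real.exp 1 * g + (j + 2)) * Real.log n ≤ Δ) :
    n.choose (j + 1) * ((codegree n k (j + 1) * scaledTime k j g n) ^ (Δ + 1) /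
      (Δ + 1).factorial) ≤ Real.exp (-Real.log n) := by
  rw [mul_comm (codegree n k (j + 1) : ℝ), scaledTime_mul_codegree hn]
  have hscale : (g * Real.log n) ^ (Δ + 1) =
      (Real.exp 1 * g * Real.log n) ^ (Δ + 1) * Real.exp (-(Δ + 1 : ℕ)) := by
    rw [mul_assoc (Real.exp 1), mul_pow (Real.exp 1), ← Real.exp_nat_mul, mul_one, mul_right_comm,
      ← Real.exp_add, add_neg_cancel, Real.exp_zero, one_mul]
  have htail : (g * Real.log n) ^ (Δ + 1) / (Δ + 1).factorial ≤
      Real.exp (Real.exp 1 * g * Real.log n) * Real.exp (-(Δ + 1 : ℕ)) := by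
    rw [hscale, mul_div_right_comm]
    exact mul_le_mul_of_nonneg_right
      (Real.pow_div_factorial_le_exp _ (by positivity) _) (Real.exp_pos _).le
  refine (mul_le_mul (choose_le_exp_mul_log (by lia) _) htail (by positivity)
    (Real.exp_pos _).le).trans ?_
  rw [← Real.exp_add, ← Real.exp_add]
  refine Real.exp_le_exp.2 ?_
  push_cast
  linarith

lemma two_mul_exp_mul_pow_le {N W ε l a : ℝ} {r s : ℕ} (hN : N ≤ Real.exp (r * l)) (hW₀ : 0 ≤ W)
    (hW : W ≤ Real.exp (ε * l)) (hε : 0 ≤ ε * l) :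
    2 * Real.exp a * (N * W ^ (2 * (s - 1))) ≤ 2 * Real.exp (a + (r + 2 * ε * s) * l) := by
  have hpow : W ^ (2 * (s - 1)) ≤ Real.exp (2 * ε * s * l) := by
    have hs : ((2 * (s - 1) : ℕ) : ℝ) ≤ 2 * s := by exact_mod_cast (by lia : 2 * (s - 1) ≤ 2 * s)
    calc W ^ (2 * (s - 1)) ≤ Real.exp (ε * l) ^ (2 * (s - 1)) := pow_le_pow_left₀ hW₀ hW _
      _ = Real.exp ((2 * (s - 1) : ℕ) * (ε * l)) := (Real.exp_nat_mul _ _).symm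
      _ ≤ Real.exp (2 * ε * s * l) :=
          Real.exp_le_exp.2 ((mul_le_mul_of_nonneg_right hs hε).trans_eq (by ring))
  calc 2 * Real.exp a * (N * W ^ (2 * (s - 1)))
      ≤ 2 * Real.exp a * (Real.exp (r * l) * Real.exp (2 * ε * s * l)) := by gcongr
    _ = 2 * Real.exp (a + (r + 2 * ε * s) * l) := by
        rw [mul_assoc, ← Real.exp_add, ← Real.exp_add]
        ring_nf

lemma sum_ite_exp_mul_pow_le {N r m S₀ : ℕ} {W g g' ε l : ℝ} (hm : 1 ≤ m)
    (hl : 0 ≤ l) (hN : N ≤ Real.exp (r * l)) (hW₀ : 0 ≤ W) (hW : W ≤ Real.exp (ε * l)) (hε : 0 ≤ ε)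
    (hg : 2 * ε ≤ g) (hg' : 4 * ε ≤ g') (hS₀ : 2 * (2 * r + 1) ≤ S₀ * g') :
    ∑ s ∈ Icc m N, 2 * (if s ≤ S₀ then Real.exp (1 - g * s * l) else Real.exp (-(g' * s * l))) *
      (N * W ^ (2 * (s - 1))) ≤
    (S₀ + 1) * (2 * Real.exp (1 - ((g - 2 * ε) * m - r) * l)) + 2 * Real.exp (-l) := by
  have hterm : ∀ s ∈ Icc m N,
      2 * (if s ≤ S₀ then Real.exp (1 - g * s * l) else Real.exp (-(g' * s * l))) *
        (N * W ^ (2 * (s - 1))) ≤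
      (if s ≤ S₀ then 2 * Real.exp (1 - ((g - 2 * ε) * m - r) * l) else 0) +
        2 * Real.exp (-((r + 1) * l)) := by
    intro s hs
    split_ifs with hsmall
    · refine (two_mul_exp_mul_pow_le hN hW₀ hW (by positivity)).trans
        (le_add_of_le_of_nonneg ?_ (by positivity))
      have hms : (m : ℝ) ≤ s := Nat.cast_le.2 (mem_Icc.1 hs).1
      have := mul_nonneg (mul_nonneg (sub_nonneg.2 hg) (sub_nonneg.2 hms)) hl
      gcongr
      linarith
    · rw [zero_add]
      refine (two_mul_exp_mul_pow_le hN hW₀ hW (by positivity)).trans ?_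
      have hS₀s : (S₀ : ℝ) ≤ s := by exact_mod_cast (not_le.1 hsmall).le
      have hlarge : S₀ * g' ≤ s * g' := mul_le_mul_of_nonneg_right hS₀s (by linarith)
      have hwalk : 4 * ε * s ≤ g' * s := mul_le_mul_of_nonneg_right hg' s.cast_nonneg
      have := mul_nonneg (show 0 ≤ g' * s - 2 * ε * s - (2 * r + 1) by linarith) hl
      gcongr
      linarith
  have hsmall_card : #{s ∈ Icc m N | s ≤ S₀} ≤ S₀ + 1 :=
    (card_le_card fun s hs => mem_range.2 (Nat.lt_succ_of_le (mem_filter.1 hs).2)).trans_eq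
      (card_range _)
  refine (sum_le_sum hterm).trans ?_
  rw [sum_add_distrib, ← sum_filter, sum_const, sum_const, nsmul_eq_mul, nsmul_eq_mul]
  refine add_le_add (mul_le_mul_of_nonneg_right (by exact_mod_cast hsmall_card) (by positivity)) ?_
  have hcard : (#(Icc m N) : ℝ) ≤ Real.exp (r * l) :=
    hN.trans' (by rw [Nat.card_Icc]; exact_mod_cast (by lia : N + 1 - m ≤ N))
  calc #(Icc m N) * (2 * Real.exp (-((r + 1) * l)))
      ≤ Real.exp (r * l) * (2 * Real.exp (-((r + 1) * l))) := by gcongr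
    _ = 2 * Real.exp (-l) := by
        rw [mul_left_comm, ← Real.exp_add]
        ring_nf

lemma eventually_mul_add_le_exp_mul (a c : ℝ) {ε : ℝ} (hε : 0 < ε) :
    ∀ᶠ x in atTop, a * x + c ≤ Real.exp (ε * x) := by
  have hlimit := ((tendsto_mul_exp_neg_mul_nhds_zero hε).const_mul a).add
    ((tendsto_exp_neg_mul_nhds_zero hε).const_mul c)
  simp only [mul_zero, add_zero] at hlimit
  filter_upwards [hlimit.eventually_le_const one_pos] with x hx
  rwa [← mul_assoc, ← add_mul, Real.exp_neg, ← div_eq_mul_inv, div_le_one (Real.exp_pos _)] at hx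

/-- A number of order `log n` that with high probability bounds the number of `k`-simplices through
any `j`-simplex of the random complex at time `scaledTime k j g n`. -/
noncomputable def degreeBound (j : ℕ) (g : ℝ) (n : ℕ) : ℕ :=
  ⌈(Real.exp 1 * g + (j + 2)) * Real.log n⌉₊

lemma eventually_degreeBound_mul_le_exp (hg : 0 ≤ g) (c : ℕ) {ε : ℝ} (hε : 0 < ε) :
    ∀ᶠ n : ℕ in atTop, ((2 * degreeBound j g n : ℕ) * c : ℝ) ≤ Real.exp (ε * Real.log n) := by
  filter_upwards [tendsto_log_natCast_atTop.eventually (eventually_mul_add_le_exp_mul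
    (2 * (Real.exp 1 * g + (j + 2)) * c) (2 * c) hε)] with n hn
  have hceil : (degreeBound j g n : ℝ) ≤ (Real.exp 1 * g + (j + 2)) * Real.log n + 1 :=
    (Nat.ceil_lt_add_one (by positivity)).le
  have := mul_le_mul_of_nonneg_right hceil (c.cast_nonneg (α := ℝ))
  push_cast
  linarith

lemma tendsto_birthMeasure_real_not_degreeLE (hjk : j < k) (hg : 0 < g) :
    Tendsto (fun n => (birthMeasure n).real
      {t | ¬ DegreeLE (born k t (scaledTime k j g n)) j (degreeBound j g n)}) atTop (nhds 0) := by
  refine squeeze_zero' (Eventually.of_forall fun n => measureReal_nonneg) ?_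
    (Real.tendsto_exp_neg_atTop_nhds_zero.comp tendsto_log_natCast_atTop)
  filter_upwards [eventually_ge_atTop (k + 1), eventually_scaledTime_mem_Ioo hjk hg] with n hn hp
  exact (birthMeasure_real_not_degreeLE_le hjk.le hp.1.le hp.2.le).trans
    (choose_mul_pow_div_factorial_le hn hg.le (Nat.le_ceil _))

lemma eventually_half_le_birthMeasure_real_degreeLE (hjk : j < k) (hg : 0 < g) :
    ∀ᶠ n in atTop, 1 / 2 ≤ (birthMeasure n).real
      {t | DegreeLE (born k t (scaledTime k j g n)) j (degreeBound j g n)} := by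
  filter_upwards [(tendsto_birthMeasure_real_not_degreeLE hjk hg).eventually_le_const
    (one_half_pos (α := ℝ))] with n hn
  have hunion := measureReal_union_le (μ := birthMeasure n)
    {t | DegreeLE (born k t (scaledTime k j g n)) j (degreeBound j g n)}
    {t | ¬ DegreeLE (born k t (scaledTime k j g n)) j (degreeBound j g n)}
  rw [← Set.compl_ofPred, Set.union_compl_self, probReal_univ] at hunion
  rw [← Set.compl_ofPred] at hn
  linarith

lemma eventually_birthMeasure_real_connectedObstructionEvent_le {g' ε : ℝ} {S₀ : ℕ} (hjk : j < k)
    (hg : 0 < g) (hg' : 0 < g') (hε : 0 < ε) (hε₁ : 2 * ε ≤ g)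
    (hε₂ : 4 * ε ≤ g / blockerRatio k j)
    (hS₀ : 2 * (2 * (j + 1 : ℕ) + 1) ≤ S₀ * (g / blockerRatio k j)) :
    ∀ᶠ n : ℕ in atTop, (birthMeasure n).real
        (connectedObstructionEvent k j n (scaledTime k j g n) (scaledTime k j g' n)) ≤
      (birthMeasure n).real
        {t | ¬ DegreeLE (born k t (scaledTime k j g' n)) j (degreeBound j g' n)} +
      ((S₀ + 1) * (2 * Real.exp (1 - ((g - 2 * ε) * (k - j + 2 : ℕ) - (j + 1 : ℕ)) * Real.log n)) +
        2 * Real.exp (-Real.log n)) := by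
  have hoverlap := (tendsto_scaledTime_mul_codegree_succ (g := g) hjk).const_mul ((S₀ : ℝ) ^ 2)
  rw [mul_zero] at hoverlap
  filter_upwards [eventually_ge_atTop (k + 1), eventually_scaledTime_mem_Ioo hjk hg,
    hoverlap.eventually_le_const one_pos,
    eventually_half_le_birthMeasure_real_degreeLE hjk hg',
    eventually_degreeBound_mul_le_exp (j := j) hg'.le ((k + 1).choose (j + 1)) hε]
    with n hn hp hoverlap hdeg hwalk
  have hblock : ∀ S : Finset (Finset (Fin n)), IsMinimalSupport j S →
      (1 - scaledTime k j g n) ^ (blockers k j S).card ≤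
        if S.card ≤ S₀ then Real.exp (1 - g * S.card * Real.log n)
        else Real.exp (-(g / blockerRatio k j * S.card * Real.log n)) := fun S hS => by
    split_ifs with hcard
    · exact one_sub_scaledTime_pow_card_blockers_le_of_card_le hjk hn hp.1.le hp.2.le hS.card_eq
        hcard hoverlap
    · exact hS.one_sub_scaledTime_pow_card_blockers_le hjk hn hp.1.le hp.2.le
  refine (birthMeasure_real_connectedObstructionEvent_le hp.1.le hp.2.le
    (h := fun s => if s ≤ S₀ then Real.exp (1 - g * s * Real.log n)
      else Real.exp (-(g / blockerRatio k j * s * Real.log n)))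
    (fun s => by positivity) hdeg hblock).trans (add_le_add le_rfl ?_)
  exact sum_ite_exp_mul_pow_le (by lia) (Real.log_natCast_nonneg n)
    (choose_le_exp_mul_log (by lia) (j + 1)) (by positivity) hwalk hε.le hε₁ hε₂ hS₀

lemma tendsto_birthMeasure_real_connectedObstructionEvent {g' : ℝ} (hjk : j < k)
    (hg : j + 1 < (k - j + 2 : ℕ) * g) (hg' : 0 < g') :
    Tendsto (fun n => (birthMeasure n).real
      (connectedObstructionEvent k j n (scaledTime k j g n) (scaledTime k j g' n)))
      atTop (nhds 0) := by
  have hratio : (1 : ℝ) ≤ blockerRatio k j := by exact_mod_cast blockerRatio_pos hjk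
  have hm : (0 : ℝ) < (k - j + 2 : ℕ) := by positivity
  have hg₀ : 0 < g := pos_of_mul_pos_right ((by positivity : (0 : ℝ) < j + 1).trans hg) hm.le
  obtain ⟨ε, hε, hε'⟩ : ∃ ε, 0 < ε ∧
      ε < min (g / blockerRatio k j / 4) ((g - (j + 1) / (k - j + 2 : ℕ)) / 2) :=
    exists_between (lt_min (by positivity)
      (half_pos (sub_pos.2 ((div_lt_iff₀' hm).2 hg))))
  obtain ⟨hε₁, hε₂⟩ := lt_min_iff.1 hε'
  obtain ⟨S₀, hS₀⟩ := exists_nat_ge ((2 * (2 * (j + 1 : ℕ) + 1)) / (g / blockerRatio k j))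
  have hrate : 0 < (g - 2 * ε) * (k - j + 2 : ℕ) - (j + 1 : ℕ) := by
    have h := (div_lt_iff₀ hm).1 (show (j + 1) / ((k - j + 2 : ℕ) : ℝ) < g - 2 * ε by linarith)
    push_cast at h ⊢
    linarith
  have hshort : Tendsto (fun n : ℕ => Real.exp
      (1 - ((g - 2 * ε) * (k - j + 2 : ℕ) - (j + 1 : ℕ)) * Real.log n)) atTop (nhds 0) := by
    simpa [Real.exp_add, sub_eq_add_neg] using ((tendsto_exp_neg_mul_nhds_zero hrate).comp
      tendsto_log_natCast_atTop).const_mul (Real.exp 1)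
  have hlong := Real.tendsto_exp_neg_atTop_nhds_zero.comp tendsto_log_natCast_atTop
  have hlimit := (tendsto_birthMeasure_real_not_degreeLE hjk hg').add
    (((hshort.const_mul 2).const_mul (S₀ + 1 : ℝ)).add (hlong.const_mul 2))
  simp only [mul_zero, add_zero] at hlimit
  refine squeeze_zero' (Eventually.of_forall fun n => measureReal_nonneg)
    (eventually_birthMeasure_real_connectedObstructionEvent_le hjk hg₀ hg' hε ?_ (by linarith)
      ((div_le_iff₀ (by positivity)).1 hS₀)) hlimit
  linarith [div_le_self hg₀.le hratio]

lemma tendsto_birthMeasure_real_obstructionEvent (hjk : j < k)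
    (hg : blockerRatio k j * (j + 2) ≤ g) :
    Tendsto (fun n => (birthMeasure n).real (obstructionEvent k j n (scaledTime k j g n)))
      atTop (nhds 0) := by
  have hratio : (0 : ℝ) < blockerRatio k j := Nat.cast_pos.2 (blockerRatio_pos hjk)
  have hg₀ : 0 < g := hg.trans_lt' (by positivity)
  have hlimit : Tendsto (fun n : ℕ => Real.exp (Real.exp (-Real.log n)) - 1) atTop (nhds 0) := by
    simpa using ((Real.continuous_exp.tendsto 0).comp
      (Real.tendsto_exp_neg_atTop_nhds_zero.comp tendsto_log_natCast_atTop)).sub_const 1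
  refine squeeze_zero' (Eventually.of_forall fun n => measureReal_nonneg) ?_ hlimit
  filter_upwards [eventually_ge_atTop (k + 1), eventually_scaledTime_mem_Ioo hjk hg₀] with n hn hp
  set x := Real.exp (-((j + 2) * Real.log n))
  have hblock : ∀ S : Finset (Finset (Fin n)), IsMinimalSupport j S →
      (1 - scaledTime k j g n) ^ (blockers k j S).card ≤ x ^ S.card := fun S hS => by
    refine (hS.one_sub_scaledTime_pow_card_blockers_le hjk hn hp.1.le hp.2.le).trans ?_
    rw [← Real.exp_nat_mul]
    have hrate : j + 2 ≤ g / blockerRatio k j := (le_div_iff₀' hratio).2 hg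
    have := mul_le_mul_of_nonneg_right hrate
      (mul_nonneg S.card.cast_nonneg (Real.log_natCast_nonneg n))
    gcongr
    linarith
  refine (birthMeasure_real_obstructionEvent_le hp.1.le hp.2.le (Real.exp_pos _).le hblock).trans
    (sub_le_sub_right ?_ 1)
  calc (1 + x) ^ n.choose (j + 1) ≤ Real.exp x ^ n.choose (j + 1) := by
        gcongr
        linarith [Real.add_one_le_exp x]
    _ = Real.exp (n.choose (j + 1) * x) := (Real.exp_nat_mul _ _).symm
    _ ≤ Real.exp (Real.exp ((j + 1 : ℕ) * Real.log n) * x) := by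
        gcongr
        exact choose_le_exp_mul_log (by lia) _
    _ = Real.exp (Real.exp (-Real.log n)) := by
        rw [← Real.exp_add]
        push_cast
        ring_nf

end ObstructionAsymptotics

section MainTheorem

variable {k j n : ℕ} {p p' : ℝ} {t : Finset (Fin n) → ℝ}

lemma le_pMj (hp : p ∈ Set.Icc 0 1) (hM : ∃ K C J, IsMj (complexAt k n t p) k j K C J) :
    p ≤ pMj k j n t :=
  le_csSup ⟨1, fun _ h => h.1.2⟩ ⟨hp, hM⟩

lemma exists_blocked_of_not_generated {f : Cochain (complexAt k n t p) j} (hj : 1 ≤ j)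
    (hjk : j < k) (hf : f ∈ cocycles (complexAt k n t p) j)
    (hgen : ¬ GeneratedByMjMinus (complexAt k n t p) k j f) :
    ∃ S : Finset (Finset (Fin n)), IsMinimalSupport j S ∧ k - j + 2 ≤ S.card ∧
      RelConnected (LinkedBy ↑(born k t p)) S ∧ ∀ K ∈ blockers k j S, p < t K := by
  obtain ⟨S, hS, hcard, hconn, hblock⟩ := exists_obstruction_of_not_generated
    isKComplex_complexAt (facetCovered_complexAt (by lia)) hj hjk hf hgen
  have hborn : {K | IsSimplex (complexAt k n t p) k K} = ↑(born k t p) :=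
    Set.ext fun _ => isSimplex_complexAt_iff (by lia)
  refine ⟨S, hS, hcard, hborn ▸ hconn, fun K hK => not_le.1 fun hle => hblock K hK ?_⟩
  exact (isSimplex_complexAt_iff (by lia)).2 (mem_born.2 ⟨(mem_blockers.1 hK).1, hle⟩)

lemma mem_obstruction_of_not_generated {q : ℝ} {f : Cochain (complexAt k n t q) j} (hj : 1 ≤ j)
    (hjk : j < k) (hpq : p ≤ q) (hf : f ∈ cocycles (complexAt k n t q) j)
    (hgen : ¬ GeneratedByMjMinus (complexAt k n t q) k j f) :
    t ∈ connectedObstructionEvent k j n p p' ∪ obstructionEvent k j n p' := by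
  obtain ⟨S, hS, hcard, hconn, hblock⟩ := exists_blocked_of_not_generated hj hjk hf hgen
  rcases le_or_gt q p' with hqp' | hqp'
  · refine Or.inl ⟨S, hS, hcard, fun K hK => hpq.trans_lt (hblock K hK), hconn.mono ?_⟩
    refine fun σ τ => LinkedBy.mono fun K hK => ?_
    have hK := mem_born.1 hK
    exact Finset.mem_coe.2 (Finset.mem_filter.2 ⟨mem_born.2 ⟨hK.1, hK.2.trans hqp'⟩,
      fun hKS => (hblock K hKS).not_ge hK.2⟩)
  · exact Or.inr ⟨S, hS, Finset.card_pos.1 (by lia), fun K hK => hqp'.trans (hblock K hK)⟩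

lemma tendsto_measure_nhds_one_of_compl_subset {Ω : ℕ → Type*} [∀ n, MeasurableSpace (Ω n)]
    {μ : ∀ n, Measure (Ω n)} [∀ n, IsProbabilityMeasure (μ n)] {s u : ∀ n, Set (Ω n)}
    (hsub : ∀ᶠ n in atTop, (s n)ᶜ ⊆ u n)
    (hu : Tendsto (fun n => (μ n).real (u n)) atTop (nhds 0)) :
    Tendsto (fun n => μ n (s n)) atTop (nhds 1) := by
  have hreal : Tendsto (fun n => (μ n).real (s n)) atTop (nhds 1) := by
    have hlower := hu.const_sub 1
    rw [sub_zero] at hlower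
    refine tendsto_of_tendsto_of_tendsto_of_le_of_le' hlower tendsto_const_nhds ?_
      (Eventually.of_forall fun n => measureReal_le_one)
    filter_upwards [hsub] with n hn
    have huniv : s n ∪ u n = Set.univ := Set.compl_subset_iff_union.1 hn
    have hunion := measureReal_union_le (μ := μ n) (s n) (u n)
    rw [huniv, probReal_univ] at hunion
    linarith
  simpa [measureReal_def] using ENNReal.tendsto_ofReal hreal

end MainTheorem

/-- Corollary 5.8: whp `N_{G_p} = ∅` for all `p ≥ p_{M_j}` simultaneously, i.e. every
`j`-cocycle of `G_p` is generated by copies of `M_j^-`. -/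
theorem statement19 (k j : ℕ) (hk : 2 ≤ k) (hj : 1 ≤ j) (hjk : j < k) :
    Tendsto (fun n : ℕ => birthMeasure n {t : Finset (Fin n) → ℝ |
      ∀ p : ℝ, pMj k j n t ≤ p →
        ∀ f : Cochain (complexAt k n t p) j,
          f ∈ cocycles (complexAt k n t p) j →
            GeneratedByMjMinus (complexAt k n t p) k j f})
      atTop (nhds 1) := by
  obtain ⟨g, hg₁, hg₂⟩ : ∃ g : ℝ, (j + 1) / (k - j + 2 : ℕ) < g ∧ g < (j + 1) / (k - j + 1 : ℕ) :=
    exists_between (div_lt_div_of_pos_left (by positivity) (by positivity) (by norm_cast; lia))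
  have hg : 0 < g := hg₁.trans' (by positivity)
  rw [div_lt_iff₀' (by positivity)] at hg₁
  rw [lt_div_iff₀' (by positivity)] at hg₂
  set g' : ℝ := blockerRatio k j * (j + 2)
  have hg' : 0 < g' := mul_pos (Nat.cast_pos.2 (blockerRatio_pos hjk)) (by positivity)
  have hlimit := (tendsto_birthMeasure_real_not_exists_isMj hj hjk hg hg₁ hg₂).add
    ((tendsto_birthMeasure_real_connectedObstructionEvent hjk hg₁ hg').add
      (tendsto_birthMeasure_real_obstructionEvent hjk le_rfl))
  rw [add_zero, add_zero] at hlimit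
  refine tendsto_measure_nhds_one_of_compl_subset ?_ (squeeze_zero
    (fun n => measureReal_nonneg) (fun n => (measureReal_union_le _ _).trans
      (add_le_add_right (measureReal_union_le _ _) _)) hlimit)
  filter_upwards [eventually_scaledTime_mem_Ioo hjk hg] with n hp t ht
  refine or_iff_not_imp_left.2 fun hM => ?_
  simp only [Set.mem_compl_iff, Set.mem_ofPred_eq, not_forall] at ht
  obtain ⟨q, hq, f, hf, hgen⟩ := ht
  exact mem_obstruction_of_not_generated hj hjk
    ((le_pMj ⟨hp.1.le, hp.2.le⟩ (not_not.1 hM)).trans hq) hf hgen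

end RSC
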